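/- arXiv:1407.8483 — 4 statements merged into one kernel-verified Lean document; each statement's English description precedes it below -/
import Mathlib

section
/- Fix real parameters t, γ with 0 < γ < t and fix r with 0 < r ≤ 1. For any sequences of integers n → ∞ and m = m(n) with 0 ≤ m < n and (n−m)/n → r, the free energy per site converges: lim_{n→∞} (1/((n−m)n)) · ln Z_{n−m,n} = ln[sinh(t+γ)] + (1−r)γ. -/
open scoped Classical

namespace SixVertex

/-- A configuration of the six-vertex model on a rectangular lattice with `R` rows and
`C` columns of vertices: the first component gives the orientations of the horizontal
edges (`h r c` is the `c`-th horizontal edge in row `r`, rows numbered from the top;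
`true` means the arrow points to the right), the second component gives the orientations
of the vertical edges (`v r c` is the `r`-th vertical edge in column `c`, numbered from
the top; `true` means the arrow points up). Boundary half-edges are included. -/
abbrev Config (R C : ℕ) := (Fin R → Fin (C + 1) → Bool) × (Fin (R + 1) → Fin C → Bool)

/-- The type (1–6) of a vertex, determined by the orientations of its left, right,
bottom and top edges (`true` = rightwards for horizontal edges, `true` = upwards for
vertical edges). The value `0` means that the ice rule is violated at the vertex. -/
def vtype : Bool → Bool → Bool → Bool → ℕ
  | false, false, false, false => 1  -- horizontal left, vertical down
  | true,  true,  true,  true  => 2  -- horizontal right, vertical up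
  | true,  true,  false, false => 3  -- horizontal right, vertical down
  | false, false, true,  true  => 4  -- horizontal left, vertical up
  | false, true,  true,  false => 5  -- horizontal away, vertical toward
  | true,  false, false, true  => 6  -- horizontal toward, vertical away
  | _,     _,     _,     _     => 0

/-- The type of the vertex in row `r` (from the top) and column `c` of a configuration. -/
def vertexType {R C : ℕ} (σ : Config R C) (r : Fin R) (c : Fin C) : ℕ :=
  vtype (σ.1 r c.castSucc) (σ.1 r c.succ) (σ.2 r.succ c) (σ.2 r.castSucc c)

/-- The ice rule: at every vertex exactly two arrows point in and two point out,
i.e. every vertex is of one of the six admissible types. -/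
def IceRule {R C : ℕ} (σ : Config R C) : Prop :=
  ∀ r c, vertexType σ r c ≠ 0

/-- Partial domain wall boundary conditions: all arrows on the left and right boundaries
point out of the lattice, all arrows on the bottom boundary point in, and the top
boundary is free. -/
def PDWBC {R C : ℕ} (σ : Config R C) : Prop :=
  (∀ r : Fin R, σ.1 r 0 = false) ∧ (∀ r : Fin R, σ.1 r (Fin.last C) = true) ∧
    (∀ c : Fin C, σ.2 (Fin.last R) c = true)

/-- The number `N_i(σ)` of vertices of type `i` in the configuration `σ`. -/
def N {R C : ℕ} (σ : Config R C) (i : ℕ) : ℕ :=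
  (Finset.univ.filter (fun p : Fin R × Fin C => vertexType σ p.1 p.2 = i)).card

/-- The partition function of the six-vertex model with pDWBC on the lattice with `R`
rows and `C` columns, with weight `w i` for vertices of type `i+1`. -/
noncomputable def Z (R C : ℕ) (w : Fin 6 → ℝ) : ℝ :=
  ∑ σ ∈ Finset.univ.filter (fun σ : Config R C => IceRule σ ∧ PDWBC σ),
    ∏ i : Fin 6, w i ^ N σ (i.val + 1)

/-- The ferroelectric weights `(a₋, a₊, b₋, b₊, c, c)` with `a = sinh(t-γ)`,
`b = sinh(t+γ)`, `c = sinh(2γ)`, `a_± = e^{±γ}a`, `b_± = e^{±γ}b`. -/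
noncomputable def fw (t γ : ℝ) : Fin 6 → ℝ := fun i =>
  if i.val = 0 then Real.exp (-γ) * Real.sinh (t - γ)
  else if i.val = 1 then Real.exp γ * Real.sinh (t - γ)
  else if i.val = 2 then Real.exp (-γ) * Real.sinh (t + γ)
  else if i.val = 3 then Real.exp γ * Real.sinh (t + γ)
  else Real.sinh (2 * γ)

/-!
Summing the vertex weight over the left and top edges, with the right and bottom edges prescribed,
gives at most `b` as soon as `a + c ≤ b`. Revealing the vertices row by row from the bottom, each
row from right to left, therefore bounds the field-free partition function by `b ^ (R * C)`. A
configuration with a single diagonal of vertices of weight `c` and weight `b` elsewhere shows that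
this is sharp up to a factor `(c / b) ^ R`, negligible on the scale `R * C`.

The field acts on the vertical arrows only. Under pDWBC the ice rule turns exactly two units of
vertical flux around in each row, so the field contributes the same factor
`exp (h * (R * (C - R)))` to every configuration.
-/

open Filter Finset Real

/-! ### Sums over paths -/

theorem sum_path_prod_le_prod {𝕜 β : Type*} [CommSemiring 𝕜] [PartialOrder 𝕜] [IsOrderedRing 𝕜]
    [Fintype β] [DecidableEq β] (y : β) {n : ℕ} {K : Fin n → β → β → 𝕜} {B : Fin n → 𝕜}
    (hK : ∀ i x z, 0 ≤ K i x z) (hB : ∀ i z, ∑ x, K i x z ≤ B i) :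
    ∑ p : Fin (n + 1) → β with p (Fin.last n) = y, ∏ i, K i (p i.castSucc) (p i.succ) ≤
      ∏ i, B i := by
  induction n with
  | zero =>
    rw [sum_filter, ← (Equiv.funUnique (Fin 1) β).symm.sum_comp]
    simp
  | succ n ih =>
    have hB₀ : 0 ≤ B 0 := (sum_nonneg fun x _ => hK 0 x y).trans (hB 0 y)
    calc
      _ = ∑ p : Fin (n + 1) → β with p (Fin.last n) = y,
            (∑ x, K 0 x (p 0)) * ∏ i : Fin n, K i.succ (p i.castSucc) (p i.succ) := by
        rw [sum_filter, ← (Fin.consEquiv fun _ => β).sum_comp, Fintype.sum_prod_type_right,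
          sum_filter]
        refine sum_congr rfl fun p _ => ?_
        simp [Fin.consEquiv, Fin.prod_univ_succ, ← Fin.succ_last, sum_mul]
      _ ≤ ∑ p : Fin (n + 1) → β with p (Fin.last n) = y,
            B 0 * ∏ i : Fin n, K i.succ (p i.castSucc) (p i.succ) := by
        gcongr with p
        · exact prod_nonneg fun i _ => hK i.succ _ _
        · exact hB 0 _
      _ ≤ B 0 * ∏ i : Fin n, B i.succ := by
        rw [← mul_sum]
        gcongr
        exact ih (fun i => hK i.succ) fun i => hB i.succ
      _ = ∏ i, B i := (Fin.prod_univ_succ B).symm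

/-! ### Local weights -/

/-- The Boltzmann weight of a vertex type, `w i` for type `i + 1`. It is `0` at type `0`, so
configurations that violate the ice rule may be included in sums. -/
def typeWeight (w : Fin 6 → ℝ) : ℕ → ℝ
  | 1 => w 0
  | 2 => w 1
  | 3 => w 2
  | 4 => w 3
  | 5 => w 4
  | 6 => w 5
  | _ => 0

theorem typeWeight_nonneg {w : Fin 6 → ℝ} (hw : ∀ i, 0 ≤ w i) (k : ℕ) : 0 ≤ typeWeight w k := by
  unfold typeWeight
  split <;> simp only [hw, le_refl]

theorem typeWeight_vtype_eq_prod (w : Fin 6 → ℝ) {l r d u : Bool} (h : vtype l r d u ≠ 0) :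
    typeWeight w (vtype l r d u) = ∏ i : Fin 6, if vtype l r d u = i + 1 then w i else 1 := by
  revert h
  cases l <;> cases r <;> cases d <;> cases u <;> simp [vtype, typeWeight, Fin.prod_univ_succ]

theorem prod_pow_N {R C : ℕ} (w : Fin 6 → ℝ) {σ : Config R C} (hσ : IceRule σ) :
    ∏ i : Fin 6, w i ^ N σ (i + 1) = ∏ r, ∏ c, typeWeight w (vertexType σ r c) := by
  have hvertex (p : Fin R × Fin C) : typeWeight w (vertexType σ p.1 p.2) =
      ∏ i : Fin 6, if vertexType σ p.1 p.2 = i + 1 then w i else 1 :=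
    typeWeight_vtype_eq_prod w (hσ p.1 p.2)
  rw [← Fintype.prod_prod_type', prod_congr rfl fun p _ => hvertex p, Finset.prod_comm]
  simp only [prod_ite, prod_const, one_pow, mul_one, N]

theorem Z_eq_sum_prod_typeWeight (R C : ℕ) (w : Fin 6 → ℝ) :
    Z R C w = ∑ σ : Config R C with PDWBC σ, ∏ r, ∏ c, typeWeight w (vertexType σ r c) := by
  rw [Z, sum_filter, sum_filter]
  refine sum_congr rfl fun σ _ => ?_
  by_cases hice : IceRule σ
  · simp only [hice, true_and, prod_pow_N w hice]
  · obtain ⟨r, c, hrc⟩ : ∃ r c, vertexType σ r c = 0 := by simpa [IceRule] using hice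
    have hzero : ∏ r, ∏ c, typeWeight w (vertexType σ r c) = 0 :=
      prod_eq_zero (mem_univ r) (prod_eq_zero (mem_univ c) (by rw [hrc]; rfl))
    simp only [hice, false_and, if_false, hzero, ite_self]

/-- The weights `(a, a, b, b, c, c)` of the model without external field. -/
def symWeights (a b c : ℝ) : Fin 6 → ℝ := ![a, a, b, b, c, c]

theorem symWeights_nonneg {a b c : ℝ} (ha : 0 ≤ a) (hb : 0 ≤ b) (hc : 0 ≤ c) (i : Fin 6) :
    0 ≤ symWeights a b c i := by
  fin_cases i <;> assumption

/-- The weights `(e⁻ʰ a, eʰ a, e⁻ʰ b, eʰ b, c, c)` of the model in a vertical external field `h`,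
which rewards upward arrows. -/
noncomputable def fieldWeights (h a b c : ℝ) : Fin 6 → ℝ :=
  ![exp (-h) * a, exp h * a, exp (-h) * b, exp h * b, c, c]

theorem fw_eq_fieldWeights (t γ : ℝ) :
    fw t γ = fieldWeights γ (sinh (t - γ)) (sinh (t + γ)) (sinh (2 * γ)) := by
  ext i
  fin_cases i <;> rfl

/-! ### The external field -/

/-- The sign of an arrow: `1` for right or up, `-1` for left or down. -/
def arrowSign (x : Bool) : ℝ := if x then 1 else -1

theorem typeWeight_fieldWeights (h a b c : ℝ) (l r d u : Bool) :
    typeWeight (fieldWeights h a b c) (vtype l r d u) =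
      exp (h * ((arrowSign d + arrowSign u) / 2)) *
        typeWeight (symWeights a b c) (vtype l r d u) := by
  cases l <;> cases r <;> cases d <;> cases u <;>
    simp [vtype, typeWeight, fieldWeights, symWeights, arrowSign]

theorem arrowSign_sub_eq_of_vtype_ne_zero {l r d u : Bool} (h : vtype l r d u ≠ 0) :
    arrowSign d - arrowSign u = arrowSign r - arrowSign l := by
  revert h
  cases l <;> cases r <;> cases d <;> cases u <;> simp [vtype, arrowSign]

section Magnetization

variable {R C : ℕ} {σ : Config R C}

theorem sum_arrowSign_succ_sub_castSucc (hice : IceRule σ) (hbc : PDWBC σ) (r : Fin R) :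
    ∑ c, arrowSign (σ.2 r.succ c) - ∑ c, arrowSign (σ.2 r.castSucc c) = 2 := by
  calc
    _ = ∑ c : Fin C, (arrowSign (σ.1 r c.succ) - arrowSign (σ.1 r c.castSucc)) := by
      rw [← sum_sub_distrib]
      exact sum_congr rfl fun c _ => arrowSign_sub_eq_of_vtype_ne_zero (hice r c)
    _ = arrowSign (σ.1 r (Fin.last C)) - arrowSign (σ.1 r 0) := by
      have hfirst := Fin.sum_univ_succ fun c => arrowSign (σ.1 r c)
      have hlast := Fin.sum_univ_castSucc fun c => arrowSign (σ.1 r c)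
      rw [sum_sub_distrib]
      linarith
    _ = 2 := by
      rw [hbc.1, hbc.2.1]
      norm_num [arrowSign]

theorem sum_arrowSign_row (hice : IceRule σ) (hbc : PDWBC σ) (k : Fin (R + 1)) :
    ∑ c, arrowSign (σ.2 k c) = C - 2 * (R - k : ℝ) := by
  induction k using Fin.reverseInduction with
  | last => simp [hbc.2.2, arrowSign]
  | cast r ih =>
    have hflux := sum_arrowSign_succ_sub_castSucc hice hbc r
    simp only [Fin.val_succ, Fin.val_castSucc] at ih ⊢
    push_cast at ih
    linarith

theorem sum_vertical_arrowSign (hice : IceRule σ) (hbc : PDWBC σ) :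
    ∑ r : Fin R, ∑ c, (arrowSign (σ.2 r.succ c) + arrowSign (σ.2 r.castSucc c)) / 2 =
      R * (C - R : ℝ) := by
  let F : ℕ → ℝ := fun k => k * (C - 2 * R + k)
  calc
    _ = ∑ r : Fin R, (F (r + 1) - F r) := by
      refine sum_congr rfl fun r _ => ?_
      rw [← sum_div, sum_add_distrib, sum_arrowSign_row hice hbc, sum_arrowSign_row hice hbc]
      simp only [F, Fin.val_succ, Fin.val_castSucc]
      push_cast
      ring
    _ = F R - F 0 := by
      rw [Fin.sum_univ_eq_sum_range fun k => F (k + 1) - F k, sum_range_sub]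
    _ = R * (C - R : ℝ) := by
      simp only [F]
      ring

end Magnetization

theorem Z_fieldWeights (R C : ℕ) (h a b c : ℝ) :
    Z R C (fieldWeights h a b c) = exp (h * (R * (C - R : ℝ))) * Z R C (symWeights a b c) := by
  unfold Z
  rw [mul_sum]
  refine sum_congr rfl fun σ hσ => ?_
  obtain ⟨hice, hbc⟩ := (mem_filter.1 hσ).2
  rw [prod_pow_N _ hice, prod_pow_N _ hice, ← sum_vertical_arrowSign hice hbc]
  simp only [vertexType, typeWeight_fieldWeights, prod_mul_distrib, mul_sum, exp_sum]

/-! ### The upper bound -/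

/-- The row-to-row transfer matrix of the model: the total weight of one row with top edges `x`,
bottom edges `y`, and outgoing arrow on the right; the left arrow is free. -/
noncomputable def rowTransfer (w : Fin 6 → ℝ) {C : ℕ} (x y : Fin C → Bool) : ℝ :=
  ∑ g : Fin (C + 1) → Bool with g (Fin.last C) = true,
    ∏ j, typeWeight w (vtype (g j.castSucc) (g j.succ) (y j) (x j))

section UpperBound

variable {w : Fin 6 → ℝ}

theorem rowTransfer_nonneg (hw : ∀ i, 0 ≤ w i) {C : ℕ} (x y : Fin C → Bool) :
    0 ≤ rowTransfer w x y :=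
  sum_nonneg fun _ _ => prod_nonneg fun _ _ => typeWeight_nonneg hw _

theorem Z_le_sum_prod_rowTransfer (hw : ∀ i, 0 ≤ w i) (R C : ℕ) :
    Z R C w ≤ ∑ v : Fin (R + 1) → Fin C → Bool with v (Fin.last R) = fun _ => true,
      ∏ r : Fin R, rowTransfer w (v r.castSucc) (v r.succ) := by
  let rows : Finset (Fin (C + 1) → Bool) := {g | g (Fin.last C) = true}
  let columns : Finset (Fin (R + 1) → Fin C → Bool) := {v | v (Fin.last R) = fun _ => true}
  calc
    Z R C w = ∑ σ : Config R C with PDWBC σ, ∏ r, ∏ c, typeWeight w (vertexType σ r c) :=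
      Z_eq_sum_prod_typeWeight R C w
    _ ≤ ∑ σ ∈ Fintype.piFinset (fun _ : Fin R => rows) ×ˢ columns,
          ∏ r, ∏ c, typeWeight w (vertexType σ r c) := by
      refine sum_le_sum_of_subset_of_nonneg (fun σ hσ => ?_) fun σ _ _ =>
        prod_nonneg fun r _ => prod_nonneg fun c _ => typeWeight_nonneg hw _
      obtain ⟨-, hright, hbottom⟩ := (mem_filter.1 hσ).2
      simpa [rows, columns, hright] using funext hbottom
    _ = _ := by
      rw [sum_product_right]
      simp only [rowTransfer, prod_univ_sum, columns, rows, vertexType]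

theorem sum_rowTransfer_le_pow (hw : ∀ i, 0 ≤ w i) {B : ℝ}
    (hB : ∀ r d, ∑ l, ∑ u, typeWeight w (vtype l r d u) ≤ B) {C : ℕ} (y : Fin C → Bool) :
    ∑ x, rowTransfer w x y ≤ B ^ C := by
  calc
    ∑ x, rowTransfer w x y = ∑ g : Fin (C + 1) → Bool with g (Fin.last C) = true,
        ∏ j, ∑ u, typeWeight w (vtype (g j.castSucc) (g j.succ) (y j) u) := by
      simp only [rowTransfer, prod_univ_sum, Fintype.piFinset_univ]
      exact sum_comm
    _ ≤ ∏ _j : Fin C, B :=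
      sum_path_prod_le_prod true (K := fun j l r => ∑ u, typeWeight w (vtype l r (y j) u))
        (fun _ _ _ => sum_nonneg fun _ _ => typeWeight_nonneg hw _) fun j r => hB r (y j)
    _ = B ^ C := Fin.prod_const C B

theorem Z_le_pow (hw : ∀ i, 0 ≤ w i) {B : ℝ}
    (hB : ∀ r d, ∑ l, ∑ u, typeWeight w (vtype l r d u) ≤ B) (R C : ℕ) :
    Z R C w ≤ (B ^ C) ^ R := by
  refine (Z_le_sum_prod_rowTransfer hw R C).trans ?_
  rw [← Fin.prod_const]
  exact sum_path_prod_le_prod _ (fun _ => rowTransfer_nonneg hw)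
    fun _ => sum_rowTransfer_le_pow hw hB

end UpperBound

theorem sum_typeWeight_symWeights_le {a b c : ℝ} (h : a + c ≤ b) (r d : Bool) :
    ∑ l, ∑ u, typeWeight (symWeights a b c) (vtype l r d u) ≤ b := by
  cases r <;> cases d <;> simp [vtype, typeWeight, symWeights] <;> linarith

/-! ### The lower bound -/

/-- The ground state of the ferroelectric phase `a + c < b` for `R ≤ C`: one vertex of type 5 in
each row, on a diagonal ending in the bottom right corner, with type 4 to its left and type 3 to
its right. -/
def groundState (R C : ℕ) : Config R C :=
  (fun r j => decide (C + r < R + j), fun r j => decide (R + j < C + r))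

theorem vertexType_groundState {R C : ℕ} (r : Fin R) (j : Fin C) :
    vertexType (groundState R C) r j =
      if R + j < C + r then 4 else if R + j = C + r then 5 else 3 := by
  simp only [vertexType, groundState, Fin.val_castSucc, Fin.val_succ]
  rcases lt_trichotomy (R + j : ℕ) (C + r) with h | h | h
  · simp [h, h.not_gt, vtype, show ¬ C + r < R + (j + 1) by omega,
      show R + j < C + (r + 1) by omega]
  · simp [h, vtype, show C + r < R + (j + 1) by omega]
  · simp [h, h.not_gt, h.ne', vtype, show C + r < R + (j + 1) by omega,
      show ¬ R + j < C + (r + 1) by omega]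

theorem pdwbc_groundState {R C : ℕ} (hRC : R ≤ C) : PDWBC (groundState R C) := by
  refine ⟨fun r => ?_, fun r => ?_, fun j => ?_⟩ <;> simp [groundState] <;> omega

theorem prod_typeWeight_groundState_row {R C : ℕ} (hRC : R ≤ C) (a b c : ℝ) (r : Fin R) :
    ∏ j, typeWeight (symWeights a b c) (vertexType (groundState R C) r j) = c * b ^ (C - 1) := by
  let j₀ : Fin C := ⟨C - R + r, by omega⟩
  have hweight (j : Fin C) : typeWeight (symWeights a b c)
      (vertexType (groundState R C) r j) = if j = j₀ then c else b := by
    have hj : j = j₀ ↔ R + j = C + r := by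
      rw [Fin.ext_iff]
      simp only [j₀]
      omega
    rw [vertexType_groundState]
    split_ifs <;> first | rfl | omega
  simp only [hweight, Fintype.prod_eq_mul_prod_compl j₀, if_true]
  rw [prod_congr rfl fun j hj => if_neg (by simpa using hj)]
  simp [card_compl]

theorem pow_le_Z_symWeights {R C : ℕ} (hRC : R ≤ C) {a b c : ℝ} (ha : 0 ≤ a) (hb : 0 ≤ b)
    (hc : 0 ≤ c) : (c * b ^ (C - 1)) ^ R ≤ Z R C (symWeights a b c) := by
  calc
    (c * b ^ (C - 1)) ^ R =
        ∏ r, ∏ j, typeWeight (symWeights a b c) (vertexType (groundState R C) r j) := by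
      simp only [prod_typeWeight_groundState_row hRC, Fin.prod_const]
    _ ≤ ∑ σ : Config R C with PDWBC σ,
          ∏ r, ∏ j, typeWeight (symWeights a b c) (vertexType σ r j) :=
      single_le_sum (f := fun σ : Config R C => ∏ r, ∏ j, typeWeight _ (vertexType σ r j))
        (fun σ _ => prod_nonneg fun r _ => prod_nonneg fun j _ =>
          typeWeight_nonneg (symWeights_nonneg ha hb hc) _)
        (mem_filter.2 ⟨mem_univ _, pdwbc_groundState hRC⟩)
    _ = Z R C (symWeights a b c) := (Z_eq_sum_prod_typeWeight R C _).symm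

/-! ### The free energy -/

theorem abs_log_Z_div_sub_le {R C : ℕ} (hR : 0 < R) (hRC : R ≤ C) {a b c : ℝ} (ha : 0 ≤ a)
    (hc : 0 < c) (hacb : a + c ≤ b) (h : ℝ) :
    |log (Z R C (fieldWeights h a b c)) / (R * C) - (log b + (1 - R / C) * h)| ≤
      (log b - log c) / C := by
  have hb : 0 < b := by linarith
  have hC : 0 < C := hR.trans_le hRC
  have hlower := pow_le_Z_symWeights hRC ha hb.le hc.le
  have hupper := Z_le_pow (symWeights_nonneg ha hb.le hc.le)
    (sum_typeWeight_symWeights_le hacb) R C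
  have hpos : 0 < (c * b ^ (C - 1)) ^ R := by positivity
  have hZ : 0 < Z R C (symWeights a b c) := hpos.trans_le hlower
  have hloglower := log_le_log hpos hlower
  have hlogupper := log_le_log hZ hupper
  rw [log_pow, log_mul hc.ne' (by positivity), log_pow, Nat.cast_pred hC] at hloglower
  rw [log_pow, log_pow] at hlogupper
  have hcb : log c ≤ log b := log_le_log hc (by linarith)
  have hsplit : log (Z R C (fieldWeights h a b c)) / (R * C) - (log b + (1 - R / C) * h) =
      (log (Z R C (symWeights a b c)) - R * (C * log b)) / (R * C) := by
    rw [Z_fieldWeights, log_mul (exp_ne_zero _) hZ.ne', log_exp]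
    field_simp
    ring
  have hscale : (log b - log c) / C = R * (log b - log c) / (R * C) := by
    field_simp
  rw [hsplit, hscale, abs_div, abs_of_pos (by positivity : (0 : ℝ) < R * C)]
  gcongr
  rw [abs_le]
  constructor
  · linarith
  · exact (sub_nonpos.2 hlogupper).trans (mul_nonneg R.cast_nonneg (sub_nonneg.2 hcb))

theorem Z_free_energy_general {ι : Type*} {l : Filter ι} {R C : ι → ℕ} {a b c h r : ℝ}
    (ha : 0 ≤ a) (hc : 0 < c) (hacb : a + c ≤ b) (hRC : ∀ᶠ i in l, 0 < R i ∧ R i ≤ C i)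
    (hC : Tendsto C l atTop) (hratio : Tendsto (fun i => (R i : ℝ) / C i) l (nhds r)) :
    Tendsto (fun i => log (Z (R i) (C i) (fieldWeights h a b c)) / (R i * C i)) l
      (nhds (log b + (1 - r) * h)) := by
  have hlim : Tendsto (fun i => log b + (1 - (R i : ℝ) / C i) * h) l
      (nhds (log b + (1 - r) * h)) := ((hratio.const_sub 1).mul_const h).const_add (log b)
  have herror : Tendsto (fun i => (log b - log c) / (C i : ℝ)) l (nhds 0) :=
    (tendsto_const_div_atTop_nhds_zero_nat _).comp hC
  refine hlim.congr_dist (squeeze_zero' (.of_forall fun _ => dist_nonneg) ?_ herror)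
  filter_upwards [hRC] with i hi
  rw [dist_comm, dist_eq]
  exact abs_log_Z_div_sub_le hi.1 hi.2 ha hc hacb h

theorem sinh_add_sinh_le {x y : ℝ} (hx : 0 ≤ x) (hy : 0 ≤ y) :
    sinh x + sinh y ≤ sinh (x + y) := by
  rw [sinh_add]
  gcongr
  · exact le_mul_of_one_le_right (sinh_nonneg_iff.2 hx) (one_le_cosh y)
  · exact le_mul_of_one_le_left (sinh_nonneg_iff.2 hy) (one_le_cosh x)

theorem sinh_sub_add_sinh_two_mul_le {t γ : ℝ} (hγ : 0 ≤ γ) (htγ : γ ≤ t) :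
    sinh (t - γ) + sinh (2 * γ) ≤ sinh (t + γ) := by
  simpa [show t - γ + 2 * γ = t + γ by ring] using
    sinh_add_sinh_le (sub_nonneg.2 htγ) (mul_nonneg zero_le_two hγ)

/-- The free energy per site of the pDWBC six-vertex model in the ferroelectric phase:
if `(n - m(n))/n → r` with `0 < r ≤ 1`, then
`(1/((n-m)n)) ln Z_{n-m,n} → ln sinh(t+γ) + (1-r)γ`. -/
theorem Z_free_energy (t γ r : ℝ) (hγ : 0 < γ) (htγ : γ < t) (hr0 : 0 < r) (hr1 : r ≤ 1)
    (m : ℕ → ℕ) (hm : ∀ n : ℕ, 1 ≤ n → m n < n)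
    (hratio : Filter.Tendsto (fun n : ℕ => ((n - m n : ℕ) : ℝ) / (n : ℝ))
      Filter.atTop (nhds r)) :
    Filter.Tendsto
      (fun n : ℕ => Real.log (Z (n - m n) n (fw t γ)) / (((n - m n : ℕ) : ℝ) * (n : ℝ)))
      Filter.atTop (nhds (Real.log (Real.sinh (t + γ)) + (1 - r) * γ)) := by
  have hsize : ∀ᶠ n in atTop, 0 < n - m n ∧ n - m n ≤ n :=
    eventually_atTop.2 ⟨1, fun n hn => ⟨Nat.sub_pos_of_lt (hm n hn), n.sub_le (m n)⟩⟩
  simpa only [fw_eq_fieldWeights] using Z_free_energy_general (sinh_nonneg_iff.2 (by linarith))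
    (sinh_pos_iff.2 (by linarith)) (sinh_sub_add_sinh_two_mul_le hγ.le htγ.le) hsize
    tendsto_id hratio

end SixVertex
end

section
/- Let τ_{n−m,n} be the determinant of the n×n matrix whose i-th row for 1 ≤ i ≤ m has entries (−2i)^{k−1}, k = 1,…,n, and whose (m+i)-th row for 1 ≤ i ≤ n−m has entries φ^{(i+k−2)}(t), k = 1,…,n, where φ(λ) = sinh(2γ)/(sinh(λ−γ)sinh(λ+γ)). Then τ_{n−m,n} = (−1)^{m(m+1)/2 − nm} · 2^{n(n−m)+m(m−1)/2} · (∏_{j=0}^{m−1} j!) · (1/(n−m)!) · Σ_{x₁,…,x_{n−m}=0}^{∞} Δ(x)² ∏_{j=1}^{n−m} w(x_j), where Δ(x) = ∏_{1≤j<k≤n−m}(x_k − x_j) is the Vandermonde determinant and the (absolutely convergent) sum runs over all tuples of nonnegative integers. -/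
open scoped Classical

namespace SixVertex

/-- The function `φ(λ) = sinh(2γ)/(sinh(λ-γ) sinh(λ+γ))`. -/
noncomputable def phi (γ : ℝ) : ℝ → ℝ := fun lam =>
  Real.sinh (2 * γ) / (Real.sinh (lam - γ) * Real.sinh (lam + γ))

/-- The discrete weight `w(x) = (e^{-2(t-γ)(x+m+1)} - e^{-2(t+γ)(x+m+1)}) ∏_{k=1}^m (x+k)`
on the nonnegative integers. -/
noncomputable def wfun (t γ : ℝ) (m : ℕ) (x : ℕ) : ℝ :=
  (Real.exp (-2 * (t - γ) * ((x : ℝ) + m + 1)) - Real.exp (-2 * (t + γ) * ((x : ℝ) + m + 1)))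
    * ∏ k ∈ Finset.Icc 1 m, ((x : ℝ) + k)

/-- The Meixner weight `w^M(x) = e^{-2(t-γ)(x+m+1)} ∏_{k=1}^m (x+k)` on the
nonnegative integers. -/
noncomputable def wM (t γ : ℝ) (m : ℕ) (x : ℕ) : ℝ :=
  Real.exp (-2 * (t - γ) * ((x : ℝ) + m + 1)) * ∏ k ∈ Finset.Icc 1 m, ((x : ℝ) + k)

/-!
`phi` is twice the difference of two translates of the Bose function, so its derivatives at `t` are
the moments of the discrete weight `2 * wfun t γ 0` on the nodes `-2 * (x + 1)`. By multilinearity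
in the Hankel rows, the determinant is a sum over `N`-tuples of nodes, `N = n - m`, of Vandermonde
determinants in which the first `m` nodes are always present; symmetrizing over the order of a tuple
produces the squared Vandermonde determinant, as in the Heine formula. A tuple meeting the first `m`
nodes contributes zero. On the remaining ones the shift `x ↦ x + m` turns the differences to the
first `m` nodes into multiples of the factors `x + k` of `wfun t γ m`.
-/

section Series

variable {ι R : Type*} {N : ℕ}

lemma summable_norm_prod [NormedCommRing R] {f : Fin N → ι → R}
    (hf : ∀ j, Summable fun x => ‖f j x‖) :
    Summable fun x : Fin N → ι => ‖∏ j, f j (x j)‖ := by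
  induction N with
  | zero => exact Summable.of_finite
  | succ N ih =>
    rw [← (Fin.consEquiv fun _ : Fin (N + 1) => ι).summable_iff]
    simpa [Function.comp_def, Fin.consEquiv, Fin.prod_univ_succ] using
      (hf 0).mul_norm (ih fun j => hf j.succ)

lemma hasSum_prod_tsum [NormedCommRing R] [CompleteSpace R] {f : Fin N → ι → R}
    (hf : ∀ j, Summable fun x => ‖f j x‖) :
    HasSum (fun x : Fin N → ι => ∏ j, f j (x j)) (∏ j, ∑' x, f j x) := by
  induction N with
  | zero => simp
  | succ N ih =>
    rw [← (Fin.consEquiv fun _ : Fin (N + 1) => ι).hasSum_iff, Fin.prod_univ_succ]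
    have hf_succ : ∀ j : Fin N, Summable fun x => ‖f j.succ x‖ := fun j => hf j.succ
    have htail : HasSum (fun y : Fin N → ι => ∏ j : Fin N, f j.succ (y j))
        (∏ j : Fin N, ∑' x, f j.succ x) := ih hf_succ
    simpa [Function.comp_def, Fin.consEquiv, Fin.prod_univ_succ] using
      (hf 0).of_norm.hasSum.mul htail (summable_mul_of_summable_norm
        (g := fun y : Fin N → ι => ∏ j : Fin N, f j.succ (y j)) (hf 0) (summable_norm_prod hf_succ))

lemma hasSum_sum_comp_perm {κ M : Type*} [Fintype κ] [DecidableEq κ] [AddCommMonoid M]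
    [TopologicalSpace M] [ContinuousAdd M] {F : (κ → ι) → M} {A : M} (hF : HasSum F A) :
    HasSum (fun x => ∑ σ : Equiv.Perm κ, F (x ∘ σ)) ((Fintype.card κ).factorial • A) := by
  have hσ (σ : Equiv.Perm κ) : HasSum (fun x => F (x ∘ σ)) A :=
    (σ.symm.arrowCongr (Equiv.refl ι)).hasSum_iff.2 hF
  simpa [Fintype.card_perm] using hasSum_sum fun σ (_ : σ ∈ Finset.univ) => hσ σ

lemma hasSum_det_append [NormedCommRing R] [CompleteSpace R] {m : ℕ}
    (a : Fin m → Fin (m + N) → R) {f : Fin N → ι → Fin (m + N) → R}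
    (hf : ∀ j k, Summable fun x => ‖f j x k‖) :
    HasSum (fun x : Fin N → ι => (Matrix.of (Fin.append a fun j => f j (x j))).det)
      (Matrix.of (Fin.append a fun j k => ∑' x, f j x k)).det := by
  have hexpand (b : Fin N → Fin (m + N) → R) : (Matrix.of (Fin.append a b)).det =
      ∑ σ : Equiv.Perm (Fin (m + N)), ((Equiv.Perm.sign σ : ℤ) : R) *
        ((∏ i, a i (σ (i.castAdd N))) * ∏ j, b j (σ (j.natAdd m))) := by
    rw [← Matrix.det_transpose, Matrix.det_apply']
    simp [Fin.prod_univ_add]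
  simp only [hexpand]
  exact hasSum_sum fun σ _ =>
    ((hasSum_prod_tsum fun j => hf j (σ (j.natAdd m))).mul_left _).mul_left _

end Series

section Vandermonde

variable {R : Type*} [CommRing R] {m n N : ℕ}

lemma det_vandermonde_eq_prod_ite (v : Fin n → R) :
    (Matrix.vandermonde v).det = ∏ i, ∏ j, if i < j then v j - v i else 1 := by
  simp only [Matrix.det_vandermonde, ← Finset.prod_filter, Finset.filter_lt_eq_Ioi]

lemma det_vandermonde_append (a : Fin m → R) (b : Fin N → R) :
    (Matrix.vandermonde (Fin.append a b)).det =
      (Matrix.vandermonde a).det * (Matrix.vandermonde b).det * ∏ j, ∏ i, (b j - a i) := by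
  have hlt (i : Fin m) (j : Fin N) : i.castAdd N < j.natAdd m :=
    Fin.lt_def.2 (i.isLt.trans_le (Nat.le_add_right m j))
  have hcast (i j : Fin m) : i.castAdd N < j.castAdd N ↔ i < j := Iff.rfl
  simp only [det_vandermonde_eq_prod_ite, Fin.prod_univ_add, Fin.append_left, Fin.append_right,
    hlt, (hlt _ _).not_gt, Fin.natAdd_lt_natAdd_iff, hcast, if_true, if_false,
    Finset.prod_const_one, Finset.prod_mul_distrib]
  rw [Finset.prod_comm (f := fun (i : Fin m) (j : Fin N) => b j - a i)]
  ring

lemma det_vandermonde_comp_perm (v : Fin n → R) (σ : Equiv.Perm (Fin n)) :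
    (Matrix.vandermonde (v ∘ σ)).det =
      ((Equiv.Perm.sign σ : ℤ) : R) * (Matrix.vandermonde v).det :=
  Matrix.det_permute σ (Matrix.vandermonde v)

lemma det_vandermonde_const_mul (c : R) (v : Fin n → R) :
    (Matrix.vandermonde fun i => c * v i).det =
      c ^ (n * (n - 1) / 2) * (Matrix.vandermonde v).det := by
  have hcols : (Matrix.vandermonde fun i => c * v i) =
      Matrix.of fun i j : Fin n => c ^ (j : ℕ) * Matrix.vandermonde v i j := by
    ext i j
    simp [Matrix.vandermonde_apply, mul_pow]
  rw [hcols, Matrix.det_mul_row, Finset.prod_pow_eq_pow_sum,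
    Fin.sum_univ_eq_sum_range (fun i => i), Finset.sum_range_id]

lemma det_vandermonde_const_mul_add (c d : R) (v : Fin n → R) :
    (Matrix.vandermonde fun i => c * (v i + d)).det =
      c ^ (n * (n - 1) / 2) * (Matrix.vandermonde v).det := by
  rw [det_vandermonde_const_mul, Matrix.det_vandermonde_add]

lemma det_vandermonde_natCast (m : ℕ) :
    (Matrix.vandermonde fun i : Fin m => ((i : ℕ) : R)).det =
      ∏ j ∈ Finset.range m, (j.factorial : R) := by
  cases m with
  | zero => simp
  | succ m =>
    rw [Matrix.det_vandermonde_id_eq_superFactorial, ← Nat.prod_range_succ_factorial,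
      Nat.cast_prod]

lemma sum_perm_prod_pow_mul_det_vandermonde (v : Fin n → R) :
    ∑ σ : Equiv.Perm (Fin n),
        (∏ j, v (σ j) ^ (j : ℕ)) * (Matrix.vandermonde (v ∘ σ)).det =
      (Matrix.vandermonde v).det ^ 2 := by
  rw [sq]
  nth_rw 2 [Matrix.det_apply']
  rw [Finset.mul_sum]
  refine Finset.sum_congr rfl fun σ _ => ?_
  rw [det_vandermonde_comp_perm]
  simp only [Matrix.vandermonde_apply]
  ring

lemma det_append_pow_mul_pow (a : Fin m → R) (c y : Fin N → R) :
    (Matrix.of (Fin.append (fun i (k : Fin (m + N)) => a i ^ (k : ℕ))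
        fun j k => c j * y j ^ ((j : ℕ) + k))).det =
      (∏ j, c j * y j ^ (j : ℕ)) * (Matrix.vandermonde (Fin.append a y)).det := by
  have hrows : Matrix.of (Fin.append (fun i (k : Fin (m + N)) => a i ^ (k : ℕ))
        fun j k => c j * y j ^ ((j : ℕ) + k)) =
      Matrix.of fun i k => Fin.append 1 (fun j => c j * y j ^ (j : ℕ)) i *
        Matrix.vandermonde (Fin.append a y) i k := by
    ext i k
    refine Fin.addCases (fun i => ?_) (fun j => ?_) i
    · simp [Matrix.vandermonde_apply]
    · simp [Matrix.vandermonde_apply, pow_add, mul_assoc]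
  rw [hrows, Matrix.det_mul_column, Fin.prod_univ_add]
  simp

end Vandermonde

section VandermondeHankel

variable {R : Type*} [Monoid R] {m N : ℕ}

/-- The matrix with `m` Vandermonde rows at the nodes `a` followed by `N` Hankel rows built from
the moment sequence `μ`. -/
def vandermondeHankel (a : Fin m → R) (μ : ℕ → R) (N : ℕ) :
    Matrix (Fin (m + N)) (Fin (m + N)) R :=
  Matrix.of (Fin.append (fun i k => a i ^ (k : ℕ)) fun j k => μ (j + k))

lemma vandermondeHankel_eq_of_ite (a μ : ℕ → R) :
    vandermondeHankel (fun i : Fin m => a i) μ N =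
      Matrix.of fun i k : Fin (m + N) =>
        if i.val < m then a i ^ k.val else μ (i.val - m + k.val) := by
  ext i k
  refine Fin.addCases (fun i => ?_) (fun j => ?_) i <;> simp [vandermondeHankel]

end VandermondeHankel

section Heine

variable {ι R : Type*} [NormedCommRing R] [CompleteSpace R] {m N : ℕ}

theorem hasSum_det_vandermondeHankel (a : Fin m → R) {c y : ι → R}
    (hc : ∀ k : ℕ, Summable fun x => ‖c x * y x ^ k‖) :
    HasSum (fun x : Fin N → ι =>
        (Matrix.vandermonde a).det * (∏ j, c (x j) * ∏ i, (y (x j) - a i)) *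
          (Matrix.vandermonde (y ∘ x)).det ^ 2)
      (N.factorial * (vandermondeHankel a (fun k => ∑' x, c x * y x ^ k) N).det) := by
  have hdet := hasSum_sum_comp_perm (hasSum_det_append (N := N)
    (fun i (k : Fin (m + N)) => a i ^ (k : ℕ))
    (f := fun j x k => c x * y x ^ ((j : ℕ) + k)) fun j k => hc (j + k))
  rw [Fintype.card_fin, nsmul_eq_mul] at hdet
  refine hdet.congr_fun fun x => ?_
  have hterm (σ : Equiv.Perm (Fin N)) :
      (Matrix.of (Fin.append (fun i (k : Fin (m + N)) => a i ^ (k : ℕ))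
          fun j k => c ((x ∘ σ) j) * y ((x ∘ σ) j) ^ ((j : ℕ) + k))).det =
        (Matrix.vandermonde a).det * (∏ j, c (x j) * ∏ i, (y (x j) - a i)) *
          ((∏ j, (y ∘ x) (σ j) ^ (j : ℕ)) * (Matrix.vandermonde ((y ∘ x) ∘ σ)).det) := by
    rw [det_append_pow_mul_pow, det_vandermonde_append,
      ← Equiv.prod_comp σ fun j => c (x j) * ∏ i, (y (x j) - a i)]
    simp only [Finset.prod_mul_distrib, Function.comp_def]
    ring
  rw [Finset.sum_congr rfl fun σ _ => hterm σ, ← Finset.mul_sum,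
    sum_perm_prod_pow_mul_det_vandermonde]

theorem hasSum_det_vandermondeHankel_initial_nodes (m : ℕ) {c y : ℕ → R}
    (hc : ∀ k : ℕ, Summable fun x => ‖c x * y x ^ k‖) :
    HasSum (fun x : Fin N → ℕ =>
        (Matrix.vandermonde fun i : Fin m => y i).det *
          (∏ j, c (x j + m) * ∏ i : Fin m, (y (x j + m) - y i)) *
          (Matrix.vandermonde fun j => y (x j + m)).det ^ 2)
      (N.factorial *
        (vandermondeHankel (fun i : Fin m => y i) (fun k => ∑' x, c x * y x ^ k) N).det) := by
  have hinj : Function.Injective fun (x : Fin N → ℕ) j => x j + m :=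
    fun x z h => funext fun j => Nat.add_right_cancel (congrFun h j)
  refine (hinj.hasSum_iff fun x hx => ?_).2
    (hasSum_det_vandermondeHankel (fun i : Fin m => y i) hc)
  obtain ⟨j, hj⟩ : ∃ j, x j < m := by
    by_contra! h
    exact hx ⟨fun j => x j - m, funext fun j => Nat.sub_add_cancel (h j)⟩
  have hnode : ∏ i : Fin m, (y (x j) - y i) = 0 :=
    Finset.prod_eq_zero (Finset.mem_univ ⟨x j, hj⟩) (sub_self _)
  have hfactor : ∏ j, c (x j) * ∏ i : Fin m, (y (x j) - y i) = 0 :=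
    Finset.prod_eq_zero (Finset.mem_univ j) (mul_eq_zero_of_right _ hnode)
  rw [hfactor, mul_zero, zero_mul]

end Heine

section ExponentialSeries

open MeasureTheory ProbabilityTheory

lemma hasSum_iteratedDeriv_of_hasSum_exp {ι : Type*} [Countable ι] {r : ι → ℝ} {F : ℝ → ℝ}
    {U : Set ℝ} (hU : IsOpen U) (hF : ∀ s ∈ U, HasSum (fun x => Real.exp (s * r x)) (F s))
    {s : ℝ} (hs : s ∈ U) (k : ℕ) :
    HasSum (fun x => r x ^ k * Real.exp (s * r x)) (iteratedDeriv k F s) := by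
  let _ : MeasurableSpace ι := ⊤
  have hs_interior : s ∈ interior (integrableExpSet r Measure.count) :=
    interior_maximal (fun z hz => integrable_count_iff.2 (hF z hz).summable.norm) hU hs
  have hmgf : F =ᶠ[nhds s] mgf r Measure.count := by
    filter_upwards [hU.mem_nhds hs] with z hz
    rw [mgf, integral_countable (integrable_count_iff.2 (hF z hz).summable.norm)]
    simpa using (hF z hz).tsum_eq.symm
  have hsummable : Summable fun x => r x ^ k * Real.exp (s * r x) :=
    (integrable_count_iff.1
      (integrable_pow_mul_exp_of_mem_interior_integrableExpSet hs_interior k)).of_norm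
  rw [hmgf.iteratedDeriv_eq, iteratedDeriv_mgf hs_interior,
    integral_countable (integrable_count_iff.2 hsummable.norm)]
  simpa using hsummable.hasSum

end ExponentialSeries

section Phi

/-- The Bose–Einstein function `s ↦ 1 / (e^{2s} - 1) = (coth s - 1) / 2`: the Dirichlet series with
exponents `-2, -4, -6, …`, of which `phi` is a difference of two translates. -/
noncomputable def bose (s : ℝ) : ℝ :=
  (Real.exp (2 * s) - 1)⁻¹

lemma exp_two_mul_sub_one (s : ℝ) : Real.exp (2 * s) - 1 = 2 * Real.exp s * Real.sinh s := by
  rw [Real.sinh_eq, two_mul s, Real.exp_add, Real.exp_neg]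
  field_simp

lemma bose_eq_cosh_div_sinh {s : ℝ} (hs : s ≠ 0) :
    bose s = (Real.cosh s / Real.sinh s - 1) / 2 := by
  have hsinh : Real.sinh s ≠ 0 := Real.sinh_ne_zero.2 hs
  rw [bose, exp_two_mul_sub_one, div_sub_one hsinh, Real.cosh_sub_sinh, Real.exp_neg]
  field_simp

lemma contDiffAt_bose {n : WithTop ℕ∞} {s : ℝ} (hs : s ≠ 0) : ContDiffAt ℝ n bose s := by
  have hne : Real.exp (2 * s) - 1 ≠ 0 := by simpa [sub_eq_zero] using hs
  unfold bose
  fun_prop (disch := assumption)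

lemma hasSum_exp_bose {s : ℝ} (hs : 0 < s) :
    HasSum (fun x : ℕ => Real.exp (s * (-2 * ((x : ℝ) + 1)))) (bose s) := by
  have hlt : Real.exp (-(2 * s)) < 1 := Real.exp_lt_one_iff.2 (by linarith)
  have hterm (x : ℕ) : Real.exp (s * (-2 * ((x : ℝ) + 1))) =
      Real.exp (-(2 * s)) * Real.exp (-(2 * s)) ^ x := by
    rw [← Real.exp_nat_mul, ← Real.exp_add]
    ring_nf
  have hvalue : bose s = Real.exp (-(2 * s)) * (1 - Real.exp (-(2 * s)))⁻¹ := by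
    rw [bose, Real.exp_neg, ← mul_inv, mul_sub, mul_one, mul_inv_cancel₀ (Real.exp_ne_zero _)]
  rw [hvalue]
  exact ((hasSum_geometric_of_lt_one (Real.exp_pos _).le hlt).mul_left _).congr_fun hterm

lemma phi_eq_bose_sub_bose {γ s : ℝ} (hsub : s - γ ≠ 0) (hadd : s + γ ≠ 0) :
    phi γ s = 2 * (bose (s - γ) - bose (s + γ)) := by
  have hsinh_sub : Real.sinh (s - γ) ≠ 0 := Real.sinh_ne_zero.2 hsub
  have hsinh_add : Real.sinh (s + γ) ≠ 0 := Real.sinh_ne_zero.2 hadd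
  have hsinh : Real.sinh (2 * γ) = Real.sinh ((s + γ) - (s - γ)) := by ring_nf
  rw [phi, hsinh, Real.sinh_sub, bose_eq_cosh_div_sinh hsub, bose_eq_cosh_div_sinh hadd]
  field_simp
  ring

lemma iteratedDeriv_phi {t γ : ℝ} (hsub : t - γ ≠ 0) (hadd : t + γ ≠ 0) (k : ℕ) :
    iteratedDeriv k (phi γ) t =
      2 * (iteratedDeriv k bose (t - γ) - iteratedDeriv k bose (t + γ)) := by
  have hphi : phi γ =ᶠ[nhds t] fun s => 2 * (bose (s - γ) - bose (s + γ)) := by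
    filter_upwards [(continuous_sub_right γ).continuousAt.eventually_ne hsub,
      (continuous_add_const γ).continuousAt.eventually_ne hadd] with s hs_sub hs_add
    exact phi_eq_bose_sub_bose hs_sub hs_add
  have hsmooth_sub : ContDiffAt ℝ k (fun s => bose (s - γ)) t :=
    ContDiffAt.comp (g := bose) (f := fun s => s - γ) t (contDiffAt_bose hsub) (by fun_prop)
  have hsmooth_add : ContDiffAt ℝ k (fun s => bose (s + γ)) t :=
    ContDiffAt.comp (g := bose) (f := fun s => s + γ) t (contDiffAt_bose hadd) (by fun_prop)
  rw [hphi.iteratedDeriv_eq, iteratedDeriv_const_mul_field,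
    iteratedDeriv_fun_sub hsmooth_sub hsmooth_add,
    iteratedDeriv_comp_sub_const, iteratedDeriv_comp_add_const]

lemma hasSum_iteratedDeriv_phi {t γ : ℝ} (h : |γ| < t) (k : ℕ) :
    HasSum (fun x : ℕ => 2 * wfun t γ 0 x * (-2 * ((x : ℝ) + 1)) ^ k)
      (iteratedDeriv k (phi γ) t) := by
  obtain ⟨hadd, hsub⟩ : 0 < t + γ ∧ 0 < t - γ := by constructor <;> linarith [abs_lt.1 h]
  have hseries {s : ℝ} (hs : 0 < s) : HasSum
      (fun x : ℕ => (-2 * ((x : ℝ) + 1)) ^ k * Real.exp (s * (-2 * ((x : ℝ) + 1))))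
      (iteratedDeriv k bose s) :=
    hasSum_iteratedDeriv_of_hasSum_exp isOpen_Ioi (fun _ => hasSum_exp_bose) hs k
  rw [iteratedDeriv_phi hsub.ne' hadd.ne']
  refine (((hseries hsub).sub (hseries hadd)).mul_left 2).congr_fun fun x => ?_
  simp only [wfun, Nat.cast_zero, add_zero, Finset.Icc_eq_empty_of_lt one_pos, Finset.prod_empty]
  ring_nf

end Phi

section Meixner

variable {t γ : ℝ} {m N : ℕ}

/-- The constant relating the moment determinant, multiplied by `N!`, to the multiple sum, where
`N = n - m`. -/
noncomputable def tauConst (m N : ℕ) : ℝ :=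
  (-1) ^ (m * (m + 1) / 2 + (m + N) * m) * 2 ^ ((m + N) * N + m * (m - 1) / 2) *
    ∏ j ∈ Finset.range m, (j.factorial : ℝ)

lemma tauConst_ne_zero (m N : ℕ) : tauConst m N ≠ 0 := by
  simp [tauConst, Finset.prod_ne_zero_iff, Nat.factorial_ne_zero]

lemma tauConst_eq (m N : ℕ) :
    tauConst m N = (-2) ^ (m * (m - 1) / 2) * (∏ j ∈ Finset.range m, (j.factorial : ℝ)) *
      (2 * (-2) ^ m) ^ N * ((-2) ^ (N * (N - 1) / 2)) ^ 2 := by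
  have htri : m * (m + 1) / 2 = m * (m - 1) / 2 + m := by
    rw [← Nat.triangle_succ, Nat.add_sub_cancel, mul_comm]
  have hN : N * N = N * (N - 1) / 2 * 2 + N := by
    rw [Nat.div_mul_cancel (Nat.even_mul_pred_self N).two_dvd, Nat.mul_sub_one,
      Nat.sub_add_cancel (Nat.le_mul_self N)]
  have hsign : (-1 : ℝ) ^ (m + m * m) = 1 := by
    rw [add_comm, ← Nat.mul_succ]
    exact (Nat.even_mul_succ_self m).neg_one_pow
  have hpow_two : (m + N) * N + m * (m - 1) / 2 =
      m * (m - 1) / 2 + (m * N + (N * (N - 1) / 2 * 2 + N)) := by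
    rw [← hN]
    ring
  have hpow_neg_one : m * (m - 1) / 2 + m + (m + N) * m =
      m * (m - 1) / 2 + m * N + (m + m * m) := by
    ring
  have hsq : ((-2 : ℝ) ^ (N * (N - 1) / 2)) ^ 2 = 2 ^ (N * (N - 1) / 2 * 2) := by
    rw [← pow_mul, (even_two.mul_left _).neg_pow]
  have hfactor : (2 * (-2 : ℝ) ^ m) ^ N = 2 ^ N * (-2) ^ (m * N) := by
    rw [mul_pow, ← pow_mul]
  rw [tauConst, htri, hpow_two, hpow_neg_one, pow_add _ _ (m + m * m), hsign, hsq, hfactor,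
    neg_pow (2 : ℝ), neg_pow (2 : ℝ)]
  ring

lemma prod_add_sub_eq_prod_Icc (x m : ℕ) :
    ∏ i : Fin m, ((x : ℝ) + m - i) = ∏ k ∈ Finset.Icc 1 m, ((x : ℝ) + k) := by
  rw [Fin.prod_univ_eq_prod_range (fun i => (x : ℝ) + m - i), ← Finset.prod_range_reflect,
    ← Finset.Ico_add_one_right_eq_Icc, Finset.prod_Ico_eq_prod_range, Nat.add_sub_cancel]
  refine Finset.prod_congr rfl fun i hi => ?_
  have hle : 1 + i ≤ m := by simpa [add_comm] using hi
  rw [Nat.sub_sub, Nat.cast_sub hle]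
  ring

lemma wfun_zero_mul_prod_sub (t γ : ℝ) (m x : ℕ) :
    wfun t γ 0 (x + m) *
        ∏ i : Fin m, (-2 * (((x + m : ℕ) : ℝ) + 1) - -2 * (((i : ℕ) : ℝ) + 1)) =
      (-2) ^ m * wfun t γ m x := by
  have hnode : ∏ i : Fin m, (-2 * (((x + m : ℕ) : ℝ) + 1) - -2 * (((i : ℕ) : ℝ) + 1)) =
      (-2) ^ m * ∏ k ∈ Finset.Icc 1 m, ((x : ℝ) + k) := by
    rw [← prod_add_sub_eq_prod_Icc, ← Fin.prod_const, ← Finset.prod_mul_distrib]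
    refine Finset.prod_congr rfl fun i _ => ?_
    push_cast
    ring
  have hcast : ((x + m : ℕ) : ℝ) + (0 : ℕ) + 1 = x + m + 1 := by push_cast; ring
  rw [hnode, wfun, wfun, hcast, Finset.Icc_eq_empty_of_lt one_pos, Finset.prod_empty]
  ring

lemma initial_nodes_summand_eq (x : Fin N → ℕ) :
    (Matrix.vandermonde fun i : Fin m => -2 * (((i : ℕ) : ℝ) + 1)).det *
        (∏ j, 2 * wfun t γ 0 (x j + m) *
          ∏ i : Fin m, (-2 * (((x j + m : ℕ) : ℝ) + 1) - -2 * (((i : ℕ) : ℝ) + 1))) *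
        (Matrix.vandermonde fun j => -2 * (((x j + m : ℕ) : ℝ) + 1)).det ^ 2 =
      tauConst m N * ((∏ j, ∏ k ∈ Finset.Ioi j, ((x k : ℝ) - x j)) ^ 2 *
        ∏ j, wfun t γ m (x j)) := by
  have hfactor (z : ℕ) : 2 * wfun t γ 0 (z + m) *
        ∏ i : Fin m, (-2 * (((z + m : ℕ) : ℝ) + 1) - -2 * (((i : ℕ) : ℝ) + 1)) =
      2 * (-2) ^ m * wfun t γ m z := by
    rw [mul_assoc, wfun_zero_mul_prod_sub, mul_assoc]
  have hshift (z : ℕ) : -2 * (((z + m : ℕ) : ℝ) + 1) = -2 * ((z : ℝ) + (m + 1)) := by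
    push_cast
    ring
  simp only [hfactor]
  simp only [hshift, det_vandermonde_const_mul_add, det_vandermonde_natCast,
    Finset.prod_mul_distrib, Finset.prod_const, Finset.card_univ, Fintype.card_fin]
  rw [Matrix.det_vandermonde, tauConst_eq]
  ring

end Meixner

theorem tau_multiple_sum_general {n m : ℕ} (hm : m ≤ n) {t γ : ℝ} (h : |γ| < t) :
    Summable (fun x : Fin (n - m) → ℕ =>
        (∏ j : Fin (n - m), ∏ k ∈ Finset.Ioi j, ((x k : ℝ) - (x j : ℝ))) ^ 2 *
          ∏ j : Fin (n - m), wfun t γ m (x j)) ∧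
    (Matrix.of fun i k : Fin n =>
        if i.val < m then (-2 * ((i.val : ℝ) + 1)) ^ k.val
        else iteratedDeriv (i.val - m + k.val) (phi γ) t).det =
      (-1 : ℝ) ^ (m * (m + 1) / 2 + n * m) * 2 ^ (n * (n - m) + m * (m - 1) / 2) *
        (∏ j ∈ Finset.range m, (j.factorial : ℝ)) * (((n - m).factorial : ℝ))⁻¹ *
        ∑' x : Fin (n - m) → ℕ,
          (∏ j : Fin (n - m), ∏ k ∈ Finset.Ioi j, ((x k : ℝ) - (x j : ℝ))) ^ 2 *
            ∏ j : Fin (n - m), wfun t γ m (x j) := by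
  obtain ⟨N, rfl⟩ := Nat.exists_eq_add_of_le hm
  rw [Nat.add_sub_cancel_left]
  have hphi := hasSum_iteratedDeriv_phi h
  have hsum := hasSum_det_vandermondeHankel_initial_nodes (N := N) m fun k => (hphi k).summable.norm
  simp only [(hphi _).tsum_eq, initial_nodes_summand_eq] at hsum
  rw [← vandermondeHankel_eq_of_ite (fun i => -2 * ((i : ℝ) + 1))
    fun k => iteratedDeriv k (phi γ) t]
  have hsummable := (summable_mul_left_iff (tauConst_ne_zero m N)).1 hsum.summable
  have hdet := hsum.unique (hsummable.hasSum.mul_left (tauConst m N))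
  refine ⟨hsummable, ?_⟩
  rw [mul_right_comm, eq_mul_inv_iff_mul_eq₀ (Nat.cast_ne_zero.2 N.factorial_ne_zero), mul_comm]
  exact hdet

/-- The mixed Vandermonde/Hankel determinant `τ_{n-m,n}` equals
`(-1)^{m(m+1)/2 - nm} 2^{n(n-m)+m(m-1)/2} (∏_{j<m} j!) (1/(n-m)!) Σ_x Δ(x)² ∏_j w(x_j)`,
the (absolutely convergent) sum running over all `(n-m)`-tuples of nonnegative integers.
(Note `(-1)^{m(m+1)/2 - nm} = (-1)^{m(m+1)/2 + nm}`.) -/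
theorem tau_multiple_sum (n m : ℕ) (hn : 1 ≤ n) (hm : m < n) (t γ : ℝ)
    (hγ : 0 < γ) (ht : γ < t) :
    Summable (fun x : Fin (n - m) → ℕ =>
        (∏ j : Fin (n - m), ∏ k ∈ Finset.Ioi j, ((x k : ℝ) - (x j : ℝ))) ^ 2 *
          ∏ j : Fin (n - m), wfun t γ m (x j)) ∧
    (Matrix.of fun i k : Fin n =>
        if i.val < m then (-2 * ((i.val : ℝ) + 1)) ^ k.val
        else iteratedDeriv (i.val - m + k.val) (phi γ) t).det =
      (-1 : ℝ) ^ (m * (m + 1) / 2 + n * m) * 2 ^ (n * (n - m) + m * (m - 1) / 2) *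
        (∏ j ∈ Finset.range m, (j.factorial : ℝ)) * (((n - m).factorial : ℝ))⁻¹ *
        ∑' x : Fin (n - m) → ℕ,
          (∏ j : Fin (n - m), ∏ k ∈ Finset.Ioi j, ((x k : ℝ) - (x j : ℝ))) ^ 2 *
            ∏ j : Fin (n - m), wfun t γ m (x j) :=
  tau_multiple_sum_general hm.le (by rwa [abs_of_pos hγ])

end SixVertex
end

section
/- For every k ≥ 0, the normalizing constants satisfy the inequality | (h_k / h_k^M)^{1/2} − (h_k^M / h_k)^{1/2} | ≤ e^{−4γ(m+1)} / ( 1 − e^{−4γ(m+1)} )^{1/2}. -/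
open scoped Classical

namespace SixVertex

/-- `IsMonicOPS w p h` says that `(p k)` is the system of monic orthogonal polynomials
on the nonnegative integers for the discrete weight `w`, with normalizing constants
`h k > 0`: each `p k` is monic of degree `k` and
`Σ_{x=0}^∞ p j (x) p k (x) w(x) = h k δ_{jk}` (the sums converging absolutely). -/
def IsMonicOPS (w : ℕ → ℝ) (p : ℕ → Polynomial ℝ) (h : ℕ → ℝ) : Prop :=
  (∀ k, (p k).Monic ∧ (p k).natDegree = k) ∧ (∀ k, 0 < h k) ∧
    ∀ j k, HasSum (fun x : ℕ => (p j).eval (x : ℝ) * (p k).eval (x : ℝ) * w x)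
      (if j = k then h k else 0)

/-!
The norm `h k` is the minimum of `∑ x, q(x)² w(x)` over monic `q` of degree `k`, because `q - p k`
has lower degree and is therefore orthogonal to `p k`. Hence norms are monotone in the weight, and
homogeneous of degree one. With `ε = e^{-4γ(m+1)}`, the factorization
`w(x) = (1 - e^{-4γ(x+m+1)}) w^M(x)` gives `(1 - ε) w^M ≤ w ≤ w^M`, so that `r = h k / h^M k` lies
in `[1 - ε, 1]`, where `|√r - √r⁻¹| = (1 - r) / √r ≤ ε / √(1 - ε)`.
-/

theorem sqrt_sub_sqrt_inv (r : ℝ) : √r - √r⁻¹ = (r - 1) / √r := by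
  rw [sub_div, Real.div_sqrt, Real.sqrt_inv, one_div]

theorem abs_sqrt_sub_sqrt_inv_le {r ε : ℝ} (hε : ε < 1) (hlo : 1 - ε ≤ r) (hup : r ≤ 1) :
    |√r - √r⁻¹| ≤ ε / √(1 - ε) := by
  have hε₀ : 0 < 1 - ε := sub_pos.2 hε
  calc |√r - √r⁻¹| = (1 - r) / √r := by
        rw [sqrt_sub_sqrt_inv, abs_div, abs_of_nonneg (Real.sqrt_nonneg r),
          abs_of_nonpos (sub_nonpos.2 hup), neg_sub]
    _ ≤ ε / √(1 - ε) :=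
        div_le_div₀ (by linarith) (by linarith) (Real.sqrt_pos.2 hε₀) (Real.sqrt_le_sqrt hlo)

namespace IsMonicOPS

variable {w w' : ℕ → ℝ} {p p' : ℕ → Polynomial ℝ} {h h' : ℕ → ℝ}

theorem monic (H : IsMonicOPS w p h) (k : ℕ) : (p k).Monic :=
  (H.1 k).1

theorem degree_eq (H : IsMonicOPS w p h) (k : ℕ) : (p k).degree = k := by
  rw [Polynomial.degree_eq_natDegree (H.monic k).ne_zero, (H.1 k).2]

theorem norm_pos (H : IsMonicOPS w p h) (k : ℕ) : 0 < h k :=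
  H.2.1 k

theorem hasSum_eval_sq (H : IsMonicOPS w p h) (k : ℕ) :
    HasSum (fun x : ℕ => (p k).eval (x : ℝ) ^ 2 * w x) (h k) := by
  simpa only [sq, if_true] using H.2.2 k k

theorem hasSum_eval_mul_eval_of_ne (H : IsMonicOPS w p h) {j k : ℕ} (hjk : j ≠ k) :
    HasSum (fun x : ℕ => (p j).eval (x : ℝ) * (p k).eval (x : ℝ) * w x) 0 := by
  simpa only [if_neg hjk] using H.2.2 j k

theorem span_image_Iio (H : IsMonicOPS w p h) (k : ℕ) :
    Submodule.span ℝ (p '' Set.Iio k) = Polynomial.degreeLT ℝ k :=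
  Polynomial.Sequence.span_degreeLT ⟨p, H.degree_eq⟩ fun i _ =>
    (H.monic i).leadingCoeff.symm ▸ isUnit_one

theorem hasSum_eval_mul_eval_of_degree_lt (H : IsMonicOPS w p h) {k : ℕ} {r : Polynomial ℝ}
    (hr : r.degree < k) :
    HasSum (fun x : ℕ => r.eval (x : ℝ) * (p k).eval (x : ℝ) * w x) 0 := by
  rw [← Polynomial.mem_degreeLT, ← H.span_image_Iio k] at hr
  induction hr using Submodule.span_induction with
  | mem q hq =>
    obtain ⟨j, hj, rfl⟩ := hq
    exact H.hasSum_eval_mul_eval_of_ne (Set.mem_Iio.1 hj).ne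
  | zero => simpa only [Polynomial.eval_zero, zero_mul] using hasSum_zero
  | add q₁ q₂ _ _ h₁ h₂ => simpa only [Polynomial.eval_add, add_mul, add_zero] using h₁.add h₂
  | smul c q _ hq =>
    simpa only [Polynomial.eval_smul, smul_eq_mul, mul_assoc, mul_zero] using hq.mul_left c

theorem norm_le_of_hasSum_eval_sq (H : IsMonicOPS w p h) (hw : ∀ x, 0 ≤ w x)
    {k : ℕ} {q : Polynomial ℝ} (hq : q.Monic) (hqk : q.degree = k) {S : ℝ}
    (hS : HasSum (fun x : ℕ => q.eval (x : ℝ) ^ 2 * w x) S) : h k ≤ S := by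
  have hdeg : (q - p k).degree < k :=
    hqk ▸ Polynomial.degree_sub_lt_left (hqk.trans (H.degree_eq k).symm) hq.ne_zero
      (hq.leadingCoeff.trans (H.monic k).leadingCoeff.symm)
  have hcross := (H.hasSum_eval_mul_eval_of_degree_lt hdeg).mul_left 2
  have hsum := (H.hasSum_eval_sq k).add hcross
  rw [mul_zero, add_zero] at hsum
  refine hasSum_le (fun x => ?_) hsum hS
  have hsq : 0 ≤ (q - p k).eval (x : ℝ) ^ 2 * w x := mul_nonneg (sq_nonneg _) (hw x)
  rw [Polynomial.eval_sub] at hsq ⊢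
  linear_combination hsq

theorem norm_le_mul_norm (H : IsMonicOPS w p h) (H' : IsMonicOPS w' p' h') {c : ℝ}
    (hw : ∀ x, 0 ≤ w x) (hle : ∀ x, w x ≤ c * w' x) (k : ℕ) : h k ≤ c * h' k := by
  have hterm (x : ℕ) : (p' k).eval (x : ℝ) ^ 2 * w x ≤ c * ((p' k).eval (x : ℝ) ^ 2 * w' x) :=
    (mul_le_mul_of_nonneg_left (hle x) (sq_nonneg _)).trans_eq (mul_left_comm _ _ _)
  have hbound := (H'.hasSum_eval_sq k).mul_left c
  have hsummable : Summable fun x : ℕ => (p' k).eval (x : ℝ) ^ 2 * w x :=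
    .of_nonneg_of_le (fun x => mul_nonneg (sq_nonneg _) (hw x)) hterm hbound.summable
  calc h k ≤ ∑' x : ℕ, (p' k).eval (x : ℝ) ^ 2 * w x :=
        H.norm_le_of_hasSum_eval_sq hw (H'.monic k) (H'.degree_eq k) hsummable.hasSum
    _ ≤ c * h' k := hasSum_le hterm hsummable.hasSum hbound

theorem abs_sqrt_norm_ratio_sub_le (H : IsMonicOPS w p h) (H' : IsMonicOPS w' p' h') {ε : ℝ}
    (hε : ε < 1) (hw' : ∀ x, 0 ≤ w' x) (hlo : ∀ x, (1 - ε) * w' x ≤ w x)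
    (hup : ∀ x, w x ≤ w' x) (k : ℕ) :
    |√(h k / h' k) - √(h' k / h k)| ≤ ε / √(1 - ε) := by
  have hε₀ : 0 < 1 - ε := sub_pos.2 hε
  have hw (x : ℕ) : 0 ≤ w x := (mul_nonneg hε₀.le (hw' x)).trans (hlo x)
  have hnorm_le : h k ≤ 1 * h' k :=
    H.norm_le_mul_norm H' hw (fun x => (hup x).trans_eq (one_mul _).symm) k
  have hnorm_ge : h' k ≤ (1 - ε)⁻¹ * h k :=
    H'.norm_le_mul_norm H hw' (fun x => (le_inv_mul_iff₀ hε₀).2 (hlo x)) k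
  rw [← inv_div (h k)]
  exact abs_sqrt_sub_sqrt_inv_le hε
    ((le_div_iff₀ (H'.norm_pos k)).2 ((le_inv_mul_iff₀ hε₀).1 hnorm_ge))
    ((div_le_iff₀ (H'.norm_pos k)).2 hnorm_le)

end IsMonicOPS

theorem wM_nonneg (t γ : ℝ) (m x : ℕ) : 0 ≤ wM t γ m x := by
  unfold wM
  positivity

theorem wfun_eq_mul_wM (t γ : ℝ) (m x : ℕ) :
    wfun t γ m x = (1 - Real.exp (-4 * γ * ((x : ℝ) + m + 1))) * wM t γ m x := by
  have hexp : Real.exp (-2 * (t + γ) * ((x : ℝ) + m + 1)) =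
      Real.exp (-4 * γ * ((x : ℝ) + m + 1)) * Real.exp (-2 * (t - γ) * ((x : ℝ) + m + 1)) := by
    rw [← Real.exp_add]
    ring_nf
  rw [wfun, wM, hexp]
  ring

theorem wfun_le_wM (t γ : ℝ) (m x : ℕ) : wfun t γ m x ≤ wM t γ m x := by
  rw [wfun_eq_mul_wM]
  exact mul_le_of_le_one_left (wM_nonneg t γ m x) (sub_le_self _ (Real.exp_nonneg _))

theorem mul_wM_le_wfun (t : ℝ) {γ : ℝ} (hγ : 0 ≤ γ) (m x : ℕ) :
    (1 - Real.exp (-4 * γ * ((m : ℝ) + 1))) * wM t γ m x ≤ wfun t γ m x := by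
  have hexponent : -4 * γ * ((x : ℝ) + m + 1) ≤ -4 * γ * ((m : ℝ) + 1) := by
    have hγx : 0 ≤ γ * (x : ℝ) := by positivity
    linarith
  rw [wfun_eq_mul_wM]
  gcongr
  exact wM_nonneg t γ m x

/-- The inequality `|(h_k/h_k^M)^{1/2} - (h_k^M/h_k)^{1/2}| ≤
e^{-4γ(m+1)}/(1 - e^{-4γ(m+1)})^{1/2}` for all `k ≥ 0`. -/
theorem norm_ratio_inequality (t γ : ℝ) (m : ℕ) (hγ : 0 < γ) (ht : γ < t)
    (p pM : ℕ → Polynomial ℝ) (h hM : ℕ → ℝ)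
    (hops : IsMonicOPS (wfun t γ m) p h) (hopsM : IsMonicOPS (wM t γ m) pM hM) (k : ℕ) :
    |Real.sqrt (h k / hM k) - Real.sqrt (hM k / h k)| ≤
      Real.exp (-4 * γ * ((m : ℝ) + 1)) /
        Real.sqrt (1 - Real.exp (-4 * γ * ((m : ℝ) + 1))) := by
  have hε : Real.exp (-4 * γ * ((m : ℝ) + 1)) < 1 :=
    Real.exp_lt_one_iff.2 (mul_neg_of_neg_of_pos (by linarith) m.cast_add_one_pos)
  exact hops.abs_sqrt_norm_ratio_sub_le hopsM hε (wM_nonneg t γ m)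
    (mul_wM_le_wfun t hγ.le m) (wfun_le_wM t γ m) k

end SixVertex
end

section
/- Fix real parameters t, γ with 0 < γ < t and fix ε with 0 < ε < 1. Then there is a constant C_ε > 0 such that for all integers m ≥ 0 and all k ≥ 0, one has h_k = h_k^M e^{r_k} with |r_k| ≤ C_ε · e^{−2γm − k^{1−ε}}. -/
open scoped Classical

namespace SixVertex

/-!
Put `a = e^{-(t-γ)}` and `b = e^{-2γ}`. Up to a common constant, `wM` is the Meixner weight `W_c`
with `c = a²` and `wfun` is `(1 - b^{2(x+m+1)}) W_c`. Minimality of norms gives `h_k ≤ h_k^M`.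
Conversely, Cauchy–Schwarz bounds `h_k^M / h_k - 1` by a multiple of
`∑ M_k² W_{a²b²} / ∑ M_k² W_{a²}`, where `M_k` is the Meixner polynomial for `W_{a²}`. Expanding
`M_k` in the Meixner polynomials for `W_{a²b²}`, with coefficients `C(k,j) r^j (1-r)^{k-j}`, turns
the numerator into an explicit sum of squares. With `α = r/b` and `β = a(1-r)`, the normalized
squares are products of a term of `(α+β)^k` and a term of `(α+β)^{m+k}`, where
`α + β = (a+b)/(1+ab) < 1`, so `h_k^M / h_k - 1` decays exponentially in `k`, uniformly in `m`.
-/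

open Polynomial Finset Filter

section OrthogonalPolynomials

variable {w v : ℕ → ℝ} {p f : ℕ → ℝ[X]} {h g : ℕ → ℝ}

theorem hasSum_eval_mul_of_degree_eq {T : ℕ → ℝ[X]} {u : ℕ → ℝ} {k : ℕ} {s : ℝ}
    (hdeg : ∀ n, (T n).degree = n)
    (hT : ∀ n ≤ k, HasSum (fun x : ℕ => (T n).eval (x : ℝ) * u x) ((T n).coeff k * s))
    {q : ℝ[X]} (hq : q.natDegree ≤ k) :
    HasSum (fun x : ℕ => q.eval (x : ℝ) * u x) (q.coeff k * s) := by
  let S : Sequence ℝ := ⟨T, hdeg⟩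
  have hspan : q ∈ Submodule.span ℝ (S '' Set.Iic k) := by
    rw [S.span_degreeLE fun i _ => (leadingCoeff_ne_zero.mpr (S.ne_zero i)).isUnit]
    exact mem_degreeLE.mpr (natDegree_le_iff_degree_le.mp hq)
  clear hq
  induction hspan using Submodule.span_induction with
  | mem _ hr =>
    obtain ⟨n, hn, rfl⟩ := hr
    exact hT n hn
  | zero => simp
  | add _ _ _ _ hr hr' => simpa [add_mul] using hr.add hr'
  | smul a _ _ hr => simpa [mul_assoc] using hr.mul_left a

theorem IsMonicOPS.coeff_self (H : IsMonicOPS w p h) (k : ℕ) : (p k).coeff k = 1 := by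
  simpa only [(H.1 k).2] using (H.1 k).1.coeff_natDegree

theorem IsMonicOPS.hasSum_sq (H : IsMonicOPS w p h) (k : ℕ) :
    HasSum (fun x : ℕ => (p k).eval (x : ℝ) ^ 2 * w x) (h k) := by
  simpa [pow_two] using H.2.2 k k

theorem IsMonicOPS.hasSum_eval_mul_eval (H : IsMonicOPS w p h) {k : ℕ} {q : ℝ[X]}
    (hq : q.natDegree ≤ k) :
    HasSum (fun x : ℕ => q.eval (x : ℝ) * (p k).eval (x : ℝ) * w x) (q.coeff k * h k) := by
  simp only [mul_assoc]
  refine hasSum_eval_mul_of_degree_eq (T := p)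
    (fun n => by rw [degree_eq_natDegree (H.1 n).1.ne_zero, (H.1 n).2]) (fun n hn => ?_) hq
  rcases hn.eq_or_lt with rfl | hlt
  · simpa only [H.coeff_self, one_mul, mul_assoc, if_true] using H.2.2 n n
  · have hcoeff : (p n).coeff k = 0 := coeff_eq_zero_of_natDegree_lt (by rwa [(H.1 n).2])
    simpa only [hcoeff, zero_mul, mul_assoc, if_neg hlt.ne] using H.2.2 n k

theorem IsMonicOPS.norm_unique (H : IsMonicOPS w p h) (F : IsMonicOPS w f g) : h = g := by
  funext k
  have hp := H.hasSum_eval_mul_eval (F.1 k).2.le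
  have hf := F.hasSum_eval_mul_eval (H.1 k).2.le
  rw [F.coeff_self, one_mul] at hp
  rw [H.coeff_self, one_mul] at hf
  exact hp.unique (hf.congr_fun fun x => by ring)

theorem IsMonicOPS.of_eq_const_mul (H : IsMonicOPS v p h) {a : ℝ} (ha : 0 < a)
    (hv : ∀ x, v x = a * w x) : IsMonicOPS w p (fun k => a⁻¹ * h k) := by
  refine ⟨H.1, fun k => mul_pos (inv_pos.mpr ha) (H.2.1 k), fun j k => ?_⟩
  simpa only [hv, mul_left_comm _ a, mul_left_comm a⁻¹ a, mul_inv_cancel_left₀ ha.ne', mul_ite,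
    mul_zero] using (H.2.2 j k).mul_left a⁻¹

theorem isMonicOPS_of_orthogonal {P : ℕ → ℝ[X]} {N : ℕ → ℝ} (hdeg : ∀ k, (P k).degree = k)
    (hN : ∀ k, 0 < N k)
    (hP : ∀ j k, HasSum (fun x : ℕ => (P j).eval (x : ℝ) * (P k).eval (x : ℝ) * w x)
      (if j = k then N k else 0)) :
    IsMonicOPS w (fun k => P k * C (P k).leadingCoeff⁻¹)
      (fun k => N k / (P k).leadingCoeff ^ 2) := by
  have hne : ∀ k, P k ≠ 0 := fun k => degree_ne_bot.mp (by simp [hdeg k])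
  refine ⟨fun k => ⟨monic_mul_leadingCoeff_inv (hne k), ?_⟩, fun k => ?_, fun j k => ?_⟩
  · exact natDegree_eq_of_degree_eq_some ((degree_mul_leadingCoeff_inv _ (hne k)).trans (hdeg k))
  · have := leadingCoeff_ne_zero.mpr (hne k)
    have := hN k
    positivity
  · have hsum := (hP j k).mul_left ((P j).leadingCoeff⁻¹ * (P k).leadingCoeff⁻¹)
    convert! hsum using 1
    · funext x
      simp only [eval_mul, eval_C]
      ring
    · split_ifs with hjk
      · rw [hjk]
        ring
      · rw [mul_zero]

theorem IsMonicOPS.norm_le_norm (H : IsMonicOPS w p h) (F : IsMonicOPS v f g)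
    (hw : ∀ x, 0 ≤ w x) (hwv : ∀ x, w x ≤ v x) (k : ℕ) : h k ≤ g k := by
  have hcross := H.hasSum_eval_mul_eval (F.1 k).2.le
  rw [F.coeff_self, one_mul] at hcross
  have hle := hasSum_le (fun x => ?_) (hcross.mul_left 2) ((H.hasSum_sq k).add (F.hasSum_sq k))
  · linarith
  · nlinarith [mul_nonneg (hw x) (sq_nonneg ((p k).eval (x : ℝ) - (f k).eval (x : ℝ))),
      mul_le_mul_of_nonneg_left (hwv x) (sq_nonneg ((f k).eval (x : ℝ)))]

/-- The Cauchy–Schwarz inequality for `g k = ∑ p_k f_k v`, using `v ≤ √(w u)`. -/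
theorem IsMonicOPS.norm_sq_le (H : IsMonicOPS w p h) (F : IsMonicOPS v f g) {u : ℕ → ℝ}
    (hw : ∀ x, 0 < w x) (hu : ∀ x, v x ^ 2 ≤ w x * u x) {k : ℕ} {S : ℝ}
    (hS : HasSum (fun x : ℕ => (f k).eval (x : ℝ) ^ 2 * u x) S) : g k ^ 2 ≤ h k * S := by
  have hcross := F.hasSum_eval_mul_eval (H.1 k).2.le
  rw [H.coeff_self, one_mul] at hcross
  have hh := H.2.1 k
  set a := g k / h k
  have hle := hasSum_le (fun x => ?_) (hcross.mul_left (2 * a))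
    (((H.hasSum_sq k).mul_left (a ^ 2)).add hS)
  · have ha : a * h k = g k := div_mul_cancel₀ _ hh.ne'
    nlinarith
  · refine le_of_mul_le_mul_left ?_ (hw x)
    nlinarith [sq_nonneg (a * (p k).eval (x : ℝ) * w x - (f k).eval (x : ℝ) * v x),
      mul_le_mul_of_nonneg_left (hu x) (sq_nonneg ((f k).eval (x : ℝ)))]

end OrthogonalPolynomials

section Meixner

/-- The Meixner weight of parameter `β = m + 1`, normalized to be `1` at the origin. -/
noncomputable def meixnerWeight (c : ℝ) (m x : ℕ) : ℝ := (x + m).choose m * c ^ x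

/-- The linear map sending `X ^ i` to `X (X - 1) ⋯ (X - i + 1) / (m + 1)_i`. It turns powers of
`1 + z X` into Meixner polynomials, so that identities between these follow from the binomial
theorem. -/
noncomputable def meixnerUmbral (m : ℕ) : ℝ[X] →ₗ[ℝ] ℝ[X] :=
  (basisMonomials ℝ).constr ℝ fun i =>
    C ((m + 1).ascFactorial i : ℝ)⁻¹ * descPochhammer ℝ i

/-- The Meixner polynomial `₂F₁(-k, -x; m + 1; 1 - 1 / c)`, with value `1` at the origin. -/
noncomputable def meixner (c : ℝ) (m k : ℕ) : ℝ[X] :=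
  meixnerUmbral m ((1 + C (1 - c⁻¹) * X) ^ k)

/-- The squared norm of `meixner c m k` for `meixnerWeight c m`. -/
noncomputable def meixnerNorm (c : ℝ) (m k : ℕ) : ℝ :=
  (c ^ k * (k + m).choose m * (1 - c) ^ (m + 1))⁻¹

/-- The polynomial `(x + m + 1)_n`, against which Meixner sums have a closed form. -/
noncomputable def shiftedAscPochhammer (m n : ℕ) : ℝ[X] :=
  (ascPochhammer ℝ n).comp (X + C (m + 1 : ℝ))

variable {c : ℝ} (m k : ℕ)

theorem meixnerUmbral_X_pow (i : ℕ) :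
    meixnerUmbral m (X ^ i) = C ((m + 1).ascFactorial i : ℝ)⁻¹ * descPochhammer ℝ i := by
  rw [meixnerUmbral, ← monomial_one_right_eq_X_pow, ← congrFun (coe_basisMonomials ℝ) i,
    Module.Basis.constr_basis]

theorem meixner_eq_sum (c : ℝ) : meixner c m k = ∑ i ∈ range (k + 1),
    C (k.choose i * (1 - c⁻¹) ^ i / (m + 1).ascFactorial i) * descPochhammer ℝ i := by
  rw [meixner, add_comm, add_pow, map_sum]
  refine sum_congr rfl fun i _ => ?_
  have hterm : (C (1 - c⁻¹) * X : ℝ[X]) ^ i * 1 ^ (k - i) * (k.choose i : ℝ[X]) =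
      ((1 - c⁻¹) ^ i * k.choose i) • X ^ i := by
    rw [smul_eq_C_mul, C_mul, C_pow, mul_pow, one_pow, C_eq_natCast]
    ring
  rw [hterm, map_smul, meixnerUmbral_X_pow, smul_eq_C_mul, ← mul_assoc, ← C_mul]
  congr 2
  ring

theorem eval_meixner (c : ℝ) (x : ℕ) : (meixner c m k).eval (x : ℝ) = ∑ i ∈ range (k + 1),
    k.choose i * (1 - c⁻¹) ^ i / (i + m).choose m * x.choose i := by
  rw [meixner_eq_sum, eval_finsetSum]
  refine sum_congr rfl fun i _ => ?_
  rw [eval_mul, eval_C, descPochhammer_eval_eq_descFactorial,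
    Nat.descFactorial_eq_factorial_mul_choose, Nat.ascFactorial_eq_factorial_mul_choose,
    add_comm m i, Nat.choose_symm_add]
  push_cast
  field_simp

theorem natDegree_meixner_le (c : ℝ) : (meixner c m k).natDegree ≤ k := by
  rw [meixner_eq_sum]
  refine natDegree_sum_le_of_forall_le _ _ fun i hi => (natDegree_C_mul_le _ _).trans ?_
  rw [descPochhammer_natDegree]
  exact mem_range_succ_iff.mp hi

theorem coeff_meixner_self (c : ℝ) :
    (meixner c m k).coeff k = (1 - c⁻¹) ^ k / (m + 1).ascFactorial k := by
  have hlead : (descPochhammer ℝ k).coeff k = 1 := by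
    simpa only [descPochhammer_natDegree] using (monic_descPochhammer ℝ k).coeff_natDegree
  have hlower : ∀ i ∈ range k, (C (k.choose i * (1 - c⁻¹) ^ i / (m + 1).ascFactorial i) *
      descPochhammer ℝ i).coeff k = 0 := fun i hi => by
    rw [coeff_C_mul, coeff_eq_zero_of_natDegree_lt, mul_zero]
    rw [descPochhammer_natDegree]
    exact mem_range.mp hi
  rw [meixner_eq_sum, finsetSum_coeff, sum_range_succ, sum_eq_zero hlower, zero_add,
    coeff_C_mul, hlead, Nat.choose_self, Nat.cast_one, one_mul, mul_one]

theorem degree_meixner (hc1 : c ≠ 1) : (meixner c m k).degree = k := by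
  refine degree_eq_of_le_of_coeff_ne_zero
    (natDegree_le_iff_degree_le.mp (natDegree_meixner_le m k c)) ?_
  rw [coeff_meixner_self]
  refine div_ne_zero (pow_ne_zero _ (sub_ne_zero.mpr fun h => hc1 ?_)) ?_
  · rw [← inv_inv c, ← h, inv_one]
  · exact_mod_cast (Nat.ascFactorial_pos m k).ne'

theorem meixner_eq_sum_meixner {c d r : ℝ} (hr : r * (1 - d⁻¹) = 1 - c⁻¹) :
    meixner c m k =
      ∑ j ∈ range (k + 1), (k.choose j * r ^ j * (1 - r) ^ (k - j)) • meixner d m j := by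
  have hbase : (1 + C (1 - c⁻¹) * X : ℝ[X]) = C r * (1 + C (1 - d⁻¹) * X) + C (1 - r) := by
    rw [← hr]
    simp only [C_mul, C_sub, C_1]
    ring
  rw [meixner, hbase, add_pow, map_sum]
  refine sum_congr rfl fun j _ => ?_
  rw [meixner, ← map_smul, smul_eq_C_mul]
  congr 1
  simp only [C_mul, C_pow, C_eq_natCast, mul_pow]
  ring

theorem monic_shiftedAscPochhammer (n : ℕ) : (shiftedAscPochhammer m n).Monic :=
  (monic_ascPochhammer ℝ n).comp_X_add_C _

theorem natDegree_shiftedAscPochhammer (n : ℕ) : (shiftedAscPochhammer m n).natDegree = n := by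
  rw [shiftedAscPochhammer, natDegree_comp, ascPochhammer_natDegree, natDegree_X_add_C, mul_one]

theorem eval_shiftedAscPochhammer (n x : ℕ) :
    (shiftedAscPochhammer m n).eval (x : ℝ) = (x + m + 1).ascFactorial n := by
  simp [shiftedAscPochhammer, Nat.cast_ascFactorial, add_assoc]

theorem choose_mul_choose_mul_ascFactorial (i n y : ℕ) :
    (y + i).choose i * ((y + i + m).choose m * (y + i + m + 1).ascFactorial n) =
      (i + m).choose m * (i + m + 1).ascFactorial n * (y + (m + n + i)).choose (m + n + i) := by
  have h1 := Nat.add_choose_mul_factorial_mul_factorial y i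
  have h2 := Nat.add_choose_mul_factorial_mul_factorial (y + i) m
  have h3 := Nat.factorial_mul_ascFactorial (y + i + m) n
  have h4 := Nat.add_choose_mul_factorial_mul_factorial i m
  have h5 := Nat.factorial_mul_ascFactorial (i + m) n
  have h6 := Nat.add_choose_mul_factorial_mul_factorial y (m + n + i)
  rw [show y + (m + n + i) = y + i + m + n by ring] at h6 ⊢
  rw [show m + n + i = i + m + n by ring] at h6 ⊢
  have hpos : 0 < y.factorial * i.factorial * m.factorial := by positivity
  refine Nat.eq_of_mul_eq_mul_left hpos ?_
  zify at *
  linear_combination (y + i + m).choose m * (y + i + m + 1).ascFactorial n *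
    (m.factorial : ℤ) * h1 + (y + i + m + 1).ascFactorial n * h2 + h3 - h6 -
    (y + i + m + n).choose (i + m + n) * (y.factorial : ℤ) * h5 -
    (i + m + 1).ascFactorial n * (y + i + m + n).choose (i + m + n) * (y.factorial : ℤ) * h4

theorem hasSum_choose_mul_meixnerWeight (hc : |c| < 1) (i n : ℕ) :
    HasSum (fun x : ℕ => (x.choose i : ℝ) *
        ((shiftedAscPochhammer m n).eval (x : ℝ) * meixnerWeight c m x))
      ((i + m).choose m * (shiftedAscPochhammer m n).eval (i : ℝ) *
        (c ^ i / (1 - c) ^ (m + n + i + 1))) := by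
  have hgeom := ((hasSum_choose_mul_geometric_of_norm_lt_one (m + n + i) hc).mul_left
    (c ^ i * ((i + m).choose m * (i + m + 1).ascFactorial n : ℕ)))
  rw [← (add_left_injective i).hasSum_iff]
  · convert! hgeom using 1
    · funext y
      have hchoose := congrArg (Nat.cast (R := ℝ)) (choose_mul_choose_mul_ascFactorial m i n y)
      push_cast at hchoose
      simp only [Function.comp_apply, eval_shiftedAscPochhammer, meixnerWeight, pow_add]
      push_cast
      linear_combination c ^ y * c ^ i * hchoose
    · rw [eval_shiftedAscPochhammer]
      push_cast
      ring
  · intro x hx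
    have hxi : x < i := by
      by_contra! hix
      exact hx ⟨x - i, Nat.sub_add_cancel hix⟩
    rw [Nat.choose_eq_zero_of_lt hxi, Nat.cast_zero, zero_mul]

theorem alternating_sum_choose_mul_eval {k : ℕ} {q : ℝ[X]} (hq : q.natDegree ≤ k) :
    ∑ i ∈ range (k + 1), (-1 : ℝ) ^ i * k.choose i * q.eval (i : ℝ) =
      q.coeff k * ((-1) ^ k * k.factorial) := by
  have hdiff : (fwdDiff (1 : ℝ))^[k] q.eval 0 = q.coeff k * k.factorial := by
    rcases hq.eq_or_lt with rfl | hlt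
    · simp [fwdDiff_iter_degree_eq_factorial]
    · simp [fwdDiff_iter_eq_zero_of_degree_lt hlt, coeff_eq_zero_of_natDegree_lt hlt]
  rw [fwdDiff_iter_eq_sum_shift] at hdiff
  rw [mul_left_comm, ← hdiff, mul_sum]
  refine sum_congr rfl fun i hi => ?_
  have hsign : (-1 : ℝ) ^ k * (-1) ^ (k - i) = (-1) ^ i := by
    obtain ⟨j, rfl⟩ := Nat.exists_eq_add_of_le (mem_range_succ_iff.mp hi)
    rw [Nat.add_sub_cancel_left, pow_add, mul_assoc, ← mul_pow]
    simp
  simp [← hsign, mul_assoc]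

theorem one_sub_inv_pow (hc0 : c ≠ 0) (i : ℕ) :
    (1 - c⁻¹) ^ i = (-1) ^ i * (1 - c) ^ i / c ^ i := by
  rw [← mul_pow, ← div_pow]
  congr 1
  field_simp
  ring

theorem hasSum_meixner_mul_shiftedAscPochhammer (hc0 : c ≠ 0) (hc1 : |c| < 1) {n : ℕ} :
    HasSum (fun x : ℕ => (shiftedAscPochhammer m n).eval (x : ℝ) *
        ((meixner c m k).eval (x : ℝ) * meixnerWeight c m x))
      ((∑ i ∈ range (k + 1), (-1) ^ i * k.choose i * (shiftedAscPochhammer m n).eval (i : ℝ)) /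
        (1 - c) ^ (m + n + 1)) := by
  have h1c : 1 - c ≠ 0 := sub_ne_zero.mpr (lt_of_abs_lt hc1).ne'
  rw [sum_div]
  convert! hasSum_sum (s := range (k + 1)) fun i _ =>
    (hasSum_choose_mul_meixnerWeight m hc1 i n).mul_left
      (k.choose i * (1 - c⁻¹) ^ i / (i + m).choose m) using 1
  · funext x
    rw [eval_meixner, sum_mul, mul_sum]
    exact sum_congr rfl fun i _ => by ring
  · refine sum_congr rfl fun i _ => ?_
    have hm : ((i + m).choose m : ℝ) ≠ 0 := mod_cast (Nat.choose_pos (Nat.le_add_left m i)).ne'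
    rw [one_sub_inv_pow hc0]
    field_simp
    ring

theorem hasSum_eval_mul_meixner (hc0 : c ≠ 0) (hc1 : |c| < 1) {q : ℝ[X]} (hq : q.natDegree ≤ k) :
    HasSum (fun x : ℕ => q.eval (x : ℝ) * ((meixner c m k).eval (x : ℝ) * meixnerWeight c m x))
      (q.coeff k * ((-1) ^ k * k.factorial / (1 - c) ^ (m + k + 1))) := by
  refine hasSum_eval_mul_of_degree_eq (T := shiftedAscPochhammer m) (fun n => ?_)
    (fun n hn => ?_) hq
  · rw [degree_eq_natDegree (monic_shiftedAscPochhammer m n).ne_zero,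
      natDegree_shiftedAscPochhammer]
  · have hsum := hasSum_meixner_mul_shiftedAscPochhammer m k hc0 hc1 (n := n)
    rw [alternating_sum_choose_mul_eval ((natDegree_shiftedAscPochhammer m n).trans_le hn)] at hsum
    rcases hn.eq_or_lt with rfl | hlt
    · rwa [← mul_div_assoc]
    · rw [coeff_eq_zero_of_natDegree_lt (by rwa [natDegree_shiftedAscPochhammer])] at hsum ⊢
      simpa using hsum

theorem hasSum_meixner_mul_meixner (hc0 : c ≠ 0) (hc1 : |c| < 1) (j : ℕ) :
    HasSum (fun x : ℕ => (meixner c m j).eval (x : ℝ) * (meixner c m k).eval (x : ℝ) *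
      meixnerWeight c m x) (if j = k then meixnerNorm c m k else 0) := by
  wlog hjk : j ≤ k generalizing j k
  · have hne : j ≠ k := fun h => hjk h.le
    simpa only [mul_comm (eval _ (meixner c m k)), if_neg hne, if_neg hne.symm] using
      this j k (le_of_not_ge hjk)
  simp only [mul_assoc]
  convert! hasSum_eval_mul_meixner m k hc0 hc1 ((natDegree_meixner_le m j c).trans hjk) using 1
  split_ifs with h
  · subst h
    have h1c : 1 - c ≠ 0 := sub_ne_zero.mpr (lt_of_abs_lt hc1).ne'
    rw [coeff_meixner_self, meixnerNorm, Nat.ascFactorial_eq_factorial_mul_choose, add_comm m j,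
      Nat.choose_symm_add, one_sub_inv_pow hc0]
    push_cast
    field_simp
    rw [pow_right_comm, neg_one_sq, one_pow]
    ring
  · rw [coeff_eq_zero_of_natDegree_lt ((natDegree_meixner_le m j c).trans_lt
      (lt_of_le_of_ne hjk h)), zero_mul]

theorem meixnerNorm_pos (hc0 : 0 < c) (hc1 : c < 1) : 0 < meixnerNorm c m k := by
  have := Nat.choose_pos (Nat.le_add_left m k)
  have := sub_pos.mpr hc1
  unfold meixnerNorm
  positivity

theorem isMonicOPS_meixner (hc0 : 0 < c) (hc1 : c < 1) :
    IsMonicOPS (meixnerWeight c m)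
      (fun k => meixner c m k * C (meixner c m k).leadingCoeff⁻¹)
      (fun k => meixnerNorm c m k / (meixner c m k).leadingCoeff ^ 2) :=
  isMonicOPS_of_orthogonal (fun k => degree_meixner m k hc1.ne)
    (fun k => meixnerNorm_pos m k hc0 hc1)
    (fun j k => hasSum_meixner_mul_meixner m k hc0.ne' (abs_lt.mpr ⟨by linarith, hc1⟩) j)

theorem hasSum_meixner_sq_mul_meixnerWeight {c d r : ℝ} (hd0 : d ≠ 0) (hd1 : |d| < 1)
    (hr : r * (1 - d⁻¹) = 1 - c⁻¹) :
    HasSum (fun x : ℕ => (meixner c m k).eval (x : ℝ) ^ 2 * meixnerWeight d m x)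
      (∑ j ∈ range (k + 1), (k.choose j * r ^ j * (1 - r) ^ (k - j)) ^ 2 * meixnerNorm d m j) := by
  set a : ℕ → ℝ := fun j => k.choose j * r ^ j * (1 - r) ^ (k - j)
  have hsum := hasSum_sum (s := range (k + 1)) fun i _ =>
    hasSum_sum (s := range (k + 1)) fun j _ =>
      (hasSum_meixner_mul_meixner m j hd0 hd1 i).mul_left (a i * a j)
  convert! hsum using 1
  · funext x
    rw [meixner_eq_sum_meixner m k hr, eval_finsetSum, pow_two, sum_mul_sum, sum_mul]
    refine sum_congr rfl fun i _ => ?_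
    rw [sum_mul]
    refine sum_congr rfl fun j _ => ?_
    simp only [eval_smul, smul_eq_mul, a]
    ring
  · refine sum_congr rfl fun i hi => ?_
    simp only [mul_ite, mul_zero, sum_ite_eq, if_pos hi, pow_two]
    rfl

theorem sum_choose_mul_choose_mul_pow_le {α β : ℝ} (hα : 0 ≤ α) (hβ : 0 ≤ β) :
    α ^ m * ∑ j ∈ range (k + 1),
        k.choose j * (m + k).choose (m + j) * (α ^ 2) ^ j * (β ^ 2) ^ (k - j) ≤
      (α + β) ^ (m + 2 * k) := by
  have hterm : ∀ j ∈ range (k + 1),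
      α ^ (m + j) * β ^ (k - j) * (m + k).choose (m + j) ≤ (α + β) ^ (m + k) := fun j hj => by
    rw [add_pow, ← Nat.add_sub_add_left m k j]
    exact single_le_sum (f := fun i => α ^ i * β ^ (m + k - i) * ((m + k).choose i : ℝ))
      (fun i _ => by positivity) (mem_range.mpr (by have := mem_range.mp hj; omega))
  calc α ^ m * ∑ j ∈ range (k + 1),
        k.choose j * (m + k).choose (m + j) * (α ^ 2) ^ j * (β ^ 2) ^ (k - j)
      = ∑ j ∈ range (k + 1), α ^ j * β ^ (k - j) * k.choose j *
          (α ^ (m + j) * β ^ (k - j) * (m + k).choose (m + j)) := by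
        rw [mul_sum]
        exact sum_congr rfl fun j _ => by ring
    _ ≤ ∑ j ∈ range (k + 1), α ^ j * β ^ (k - j) * k.choose j * (α + β) ^ (m + k) :=
        sum_le_sum fun j hj => mul_le_mul_of_nonneg_left (hterm j hj) (by positivity)
    _ = (α + β) ^ (m + 2 * k) := by
        rw [← sum_mul, ← add_pow]
        ring

theorem choose_mul_meixnerNorm {c d : ℝ} (hc0 : c ≠ 0) (hc1 : c ≠ 1) (j : ℕ) :
    k.choose j * meixnerNorm d m j = meixnerNorm c m k *
      ((m + k).choose (m + j) * (c ^ k / d ^ j) * ((1 - c) / (1 - d)) ^ (m + 1)) := by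
  have hchoose := congrArg (Nat.cast (R := ℝ))
    (Nat.choose_mul (n := m + k) (Nat.le_add_right m j))
  rw [Nat.add_sub_cancel_left, Nat.add_sub_cancel_left, add_comm m j, add_comm m k] at hchoose
  push_cast at hchoose
  have := sub_ne_zero.mpr hc1.symm
  have hj : ((j + m).choose m : ℝ) ≠ 0 := mod_cast (Nat.choose_pos (Nat.le_add_left m j)).ne'
  have hk : ((k + m).choose m : ℝ) ≠ 0 := mod_cast (Nat.choose_pos (Nat.le_add_left m k)).ne'
  have hratio : (k.choose j / (j + m).choose m : ℝ) =
      (k + m).choose (j + m) / (k + m).choose m := by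
    rw [div_eq_div_iff hj hk]
    linear_combination -hchoose
  calc k.choose j * meixnerNorm d m j
      = k.choose j / (j + m).choose m * (d ^ j * (1 - d) ^ (m + 1))⁻¹ := by
        rw [meixnerNorm, mul_right_comm, mul_inv _ ((j + m).choose m : ℝ)]
        ring
    _ = _ := by
        rw [hratio, meixnerNorm, add_comm m j, add_comm m k, div_pow]
        field_simp

theorem connection_sq_mul_meixnerNorm {a b α : ℝ} (ha0 : a ≠ 0) (ha1 : a ^ 2 ≠ 1) (hb0 : b ≠ 0)
    (hα : (1 - a ^ 2) / (1 - a ^ 2 * b ^ 2) = α / b) {j : ℕ} (hj : j ≤ k) :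
    (k.choose j * (b * α) ^ j * (1 - b * α) ^ (k - j)) ^ 2 * meixnerNorm (a ^ 2 * b ^ 2) m j =
      meixnerNorm (a ^ 2) m k * (α / b) ^ (m + 1) * (k.choose j * (m + k).choose (m + j) *
        (α ^ 2) ^ j * ((a * (1 - b * α)) ^ 2) ^ (k - j)) := by
  have hnorm := choose_mul_meixnerNorm m k (d := a ^ 2 * b ^ 2) (pow_ne_zero 2 ha0) ha1 j
  rw [hα] at hnorm
  obtain ⟨i, rfl⟩ := Nat.exists_eq_add_of_le hj
  rw [Nat.add_sub_cancel_left]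
  calc _ = (j + i).choose j * (b * α) ^ (2 * j) * (1 - b * α) ^ (2 * i) *
        ((j + i).choose j * meixnerNorm (a ^ 2 * b ^ 2) m j) := by ring
    _ = _ := by
      rw [hnorm, pow_add (a ^ 2), mul_pow (a ^ 2), mul_pow a, mul_pow (a ^ 2), pow_mul (b * α),
        pow_mul (1 - b * α), mul_pow b, mul_pow (b ^ 2)]
      field_simp

theorem exists_hasSum_meixner_sq_mul_le {a b : ℝ} (ha0 : 0 < a) (ha1 : a < 1) (hb0 : 0 < b)
    (hb1 : b < 1) :
    ∃ S, HasSum (fun x : ℕ =>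
        (meixner (a ^ 2) m k).eval (x : ℝ) ^ 2 * meixnerWeight (a ^ 2 * b ^ 2) m x) S ∧
      S ≤ meixnerNorm (a ^ 2) m k * ((1 - a ^ 2) / (1 - a ^ 2 * b ^ 2) / b ^ m *
        ((a + b) / (1 + a * b)) ^ (m + 2 * k)) := by
  have hab0 : 0 < a * b := mul_pos ha0 hb0
  have ha : 0 < 1 - a ^ 2 := by nlinarith
  have hb : 0 < 1 - b ^ 2 := by nlinarith
  have hab : 0 < 1 - a ^ 2 * b ^ 2 := by nlinarith
  set α := b * (1 - a ^ 2) / (1 - a ^ 2 * b ^ 2) with hα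
  have hαb : (1 - a ^ 2) / (1 - a ^ 2 * b ^ 2) = α / b := by
    rw [hα]
    field_simp
  have hr : b * α * (1 - (a ^ 2 * b ^ 2)⁻¹) = 1 - (a ^ 2)⁻¹ := by
    rw [hα, mul_div_assoc', div_mul_eq_mul_div, div_eq_iff hab.ne']
    field_simp
    ring
  have hβ : a * (1 - b * α) = a * (1 - b ^ 2) / (1 - a ^ 2 * b ^ 2) := by
    rw [hα]
    field_simp
    ring
  have hαβ : α + a * (1 - b * α) = (a + b) / (1 + a * b) := by
    rw [hβ, hα, ← add_div, div_eq_div_iff hab.ne' (by positivity)]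
    ring
  refine ⟨_, hasSum_meixner_sq_mul_meixnerWeight m k (by positivity)
    (by rw [abs_of_pos] <;> nlinarith) hr, ?_⟩
  calc _ = _ := sum_congr rfl fun j hj => connection_sq_mul_meixnerNorm m k ha0.ne'
        (sub_pos.mp ha).ne hb0.ne' hαb (mem_range_succ_iff.mp hj)
    _ = meixnerNorm (a ^ 2) m k * ((1 - a ^ 2) / (1 - a ^ 2 * b ^ 2) / b ^ m * (α ^ m *
          ∑ j ∈ range (k + 1), k.choose j * (m + k).choose (m + j) *
            (α ^ 2) ^ j * ((a * (1 - b * α)) ^ 2) ^ (k - j))) := by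
        rw [← mul_sum, hαb, div_pow, pow_succ, pow_succ]
        ring
    _ ≤ _ := by
        have := meixnerNorm_pos m k (by positivity) (sub_pos.mp ha)
        rw [← hαβ]
        gcongr
        exact sum_choose_mul_choose_mul_pow_le m k (by positivity) (by rw [hβ]; positivity)

end Meixner

section DampedMeixner

/-- The Meixner weight damped by `1 - q ^ (x + m + 1)`: the weight `wfun` up to a constant. -/
noncomputable def dampedMeixnerWeight (c q : ℝ) (m x : ℕ) : ℝ :=
  (1 - q ^ (x + m + 1)) * meixnerWeight c m x

variable {c q : ℝ}

theorem meixnerWeight_pos (hc : 0 < c) (m x : ℕ) : 0 < meixnerWeight c m x := by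
  have := Nat.choose_pos (Nat.le_add_left m x)
  unfold meixnerWeight
  positivity

theorem dampedMeixnerWeight_pos (hc : 0 < c) (hq0 : 0 ≤ q) (hq1 : q < 1) (m x : ℕ) :
    0 < dampedMeixnerWeight c q m x :=
  mul_pos (sub_pos.mpr (pow_lt_one₀ hq0 hq1 (Nat.succ_ne_zero _))) (meixnerWeight_pos hc m x)

theorem dampedMeixnerWeight_le (hc : 0 < c) (hq : 0 ≤ q) (m x : ℕ) :
    dampedMeixnerWeight c q m x ≤ meixnerWeight c m x :=
  mul_le_of_le_one_left (meixnerWeight_pos hc m x).le (sub_le_self _ (pow_nonneg hq _))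

theorem meixnerWeight_sq_le (hq0 : 0 ≤ q) (hq1 : q < 1) (m x : ℕ) :
    meixnerWeight c m x ^ 2 ≤ dampedMeixnerWeight c q m x *
      (meixnerWeight c m x + q ^ (m + 1) / (1 - q) * meixnerWeight (c * q) m x) := by
  have hy0 : 0 ≤ q ^ (x + m + 1) := pow_nonneg hq0 _
  have hyq : q ^ (x + m + 1) ≤ q := pow_le_of_le_one hq0 hq1.le (Nat.succ_ne_zero _)
  have hdamp : q ^ (m + 1) * meixnerWeight (c * q) m x =
      q ^ (x + m + 1) * meixnerWeight c m x := by
    rw [meixnerWeight, meixnerWeight, mul_pow]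
    ring
  rw [dampedMeixnerWeight, div_mul_eq_mul_div, hdamp]
  generalize q ^ (x + m + 1) = y at *
  have hfactor : 1 ≤ (1 - y) * (1 + y / (1 - q)) := by
    have := sub_pos.mpr hq1
    field_simp
    nlinarith
  calc meixnerWeight c m x ^ 2 = 1 * meixnerWeight c m x ^ 2 := (one_mul _).symm
    _ ≤ (1 - y) * (1 + y / (1 - q)) * meixnerWeight c m x ^ 2 := by gcongr
    _ = _ := by ring

variable {a b : ℝ} {m : ℕ} {p f : ℕ → ℝ[X]} {h g : ℕ → ℝ}

theorem IsMonicOPS.norm_meixner_le_norm_damped_mul (ha0 : 0 < a) (ha1 : a < 1)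
    (hb0 : 0 < b) (hb1 : b < 1)
    (H : IsMonicOPS (dampedMeixnerWeight (a ^ 2) (b ^ 2) m) p h)
    (F : IsMonicOPS (meixnerWeight (a ^ 2) m) f g) (k : ℕ) :
    g k ≤ h k * (1 + b ^ 2 * (1 - a ^ 2) / ((1 - b ^ 2) * (1 - a ^ 2 * b ^ 2)) * b ^ m *
      ((a + b) / (1 + a * b)) ^ (m + 2 * k)) := by
  have ha1' : a ^ 2 < 1 := pow_lt_one₀ ha0.le ha1 two_ne_zero
  have hb1' : b ^ 2 < 1 := pow_lt_one₀ hb0.le hb1 two_ne_zero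
  have hM := isMonicOPS_meixner m (pow_pos ha0 2) ha1'
  rw [F.norm_unique hM]
  obtain ⟨S, hS, hSle⟩ := exists_hasSum_meixner_sq_mul_le m k ha0 ha1 hb0 hb1
  set l := (meixner (a ^ 2) m k).leadingCoeff
  set N := meixnerNorm (a ^ 2) m k
  have hmajorant : HasSum (fun x : ℕ => (meixner (a ^ 2) m k * C l⁻¹).eval (x : ℝ) ^ 2 *
      (meixnerWeight (a ^ 2) m x +
        (b ^ 2) ^ (m + 1) / (1 - b ^ 2) * meixnerWeight (a ^ 2 * b ^ 2) m x))
      (N / l ^ 2 + (b ^ 2) ^ (m + 1) / (1 - b ^ 2) * (S / l ^ 2)) := by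
    refine ((hM.hasSum_sq k).add ((hS.div_const (l ^ 2)).mul_left _)).congr_fun fun x => ?_
    simp only [eval_mul, eval_C]
    ring
  have hsq := H.norm_sq_le hM (dampedMeixnerWeight_pos (pow_pos ha0 2) (sq_nonneg b) hb1' m)
    (meixnerWeight_sq_le (sq_nonneg b) hb1' m) hmajorant
  have hl : 0 < l ^ 2 := sq_pos_of_ne_zero (leadingCoeff_ne_zero.mpr
    (degree_ne_bot.mp (by simp [degree_meixner m k ha1'.ne])))
  have hb : 0 < 1 - b ^ 2 := sub_pos.mpr hb1'
  have hG : 0 < N / l ^ 2 := hM.2.1 k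
  refine le_of_mul_le_mul_left ?_ hG
  calc N / l ^ 2 * (N / l ^ 2)
      ≤ h k * (N / l ^ 2 + (b ^ 2) ^ (m + 1) / (1 - b ^ 2) * (N * ((1 - a ^ 2) /
          (1 - a ^ 2 * b ^ 2) / b ^ m * ((a + b) / (1 + a * b)) ^ (m + 2 * k)) / l ^ 2)) := by
        rw [← pow_two]
        refine hsq.trans ?_
        have := H.2.1 k
        gcongr
    _ = _ := by
        have hpow : (b ^ 2) ^ (m + 1) = b ^ 2 * b ^ m * b ^ m := by ring
        rw [hpow]
        field_simp

end DampedMeixner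

section Weights

variable (t γ : ℝ) (m x : ℕ)

theorem prod_Icc_add_eq_factorial_mul_choose :
    ∏ k ∈ Icc 1 m, ((x : ℝ) + k) = m.factorial * (x + m).choose m := by
  rw [← Nat.cast_mul, ← Nat.ascFactorial_eq_factorial_mul_choose]
  induction m with
  | zero => simp
  | succ m ih =>
    rw [prod_Icc_succ_top (Nat.le_add_left 1 m), ih, Nat.ascFactorial_succ]
    push_cast
    ring

theorem wM_eq : wM t γ m x = (Real.exp (-(t - γ)) ^ 2) ^ (m + 1) * m.factorial *
    meixnerWeight (Real.exp (-(t - γ)) ^ 2) m x := by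
  have hexp : Real.exp (-2 * (t - γ) * ((x : ℝ) + m + 1)) =
      (Real.exp (-(t - γ)) ^ 2) ^ (x + m + 1) := by
    rw [← pow_mul, ← Real.exp_nat_mul]
    push_cast
    ring_nf
  rw [wM, hexp, prod_Icc_add_eq_factorial_mul_choose, meixnerWeight]
  ring

theorem wfun_eq : wfun t γ m x = (Real.exp (-(t - γ)) ^ 2) ^ (m + 1) * m.factorial *
    dampedMeixnerWeight (Real.exp (-(t - γ)) ^ 2) (Real.exp (-(2 * γ)) ^ 2) m x := by
  have hexp : Real.exp (-2 * (t + γ) * ((x : ℝ) + m + 1)) =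
      (Real.exp (-(2 * γ)) ^ 2) ^ (x + m + 1) * Real.exp (-2 * (t - γ) * ((x : ℝ) + m + 1)) := by
    rw [← pow_mul, ← Real.exp_nat_mul, ← Real.exp_add]
    push_cast
    ring_nf
  rw [wfun, hexp, ← one_sub_mul, mul_assoc, ← wM, wM_eq, dampedMeixnerWeight]
  ring

end Weights

section Asymptotics

theorem one_sub_exp_neg_sq (s : ℝ) :
    1 - Real.exp (-s) ^ 2 = 2 * Real.exp (-s) * Real.sinh s := by
  rw [Real.sinh_eq, Real.exp_neg]
  field_simp

theorem exp_neg_sq_mul_div_eq_sinh (u v : ℝ) :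
    Real.exp (-v) ^ 2 * (1 - Real.exp (-u) ^ 2) /
        ((1 - Real.exp (-v) ^ 2) * (1 - Real.exp (-u) ^ 2 * Real.exp (-v) ^ 2)) =
      Real.sinh u / (2 * Real.sinh v * Real.sinh (u + v)) := by
  have hadd : Real.exp (-u) * Real.exp (-v) = Real.exp (-(u + v)) := by
    rw [← Real.exp_add, neg_add]
  rw [← mul_pow, hadd, one_sub_exp_neg_sq, one_sub_exp_neg_sq, one_sub_exp_neg_sq, ← hadd]
  field_simp

theorem exp_neg_add_div_eq_cosh (u v : ℝ) :
    (Real.exp (-u) + Real.exp (-v)) / (1 + Real.exp (-u) * Real.exp (-v)) =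
      Real.cosh ((u - v) / 2) / Real.cosh ((u + v) / 2) := by
  have hsq : ∀ s : ℝ, Real.exp (-s) = (Real.exp (s / 2) ^ 2)⁻¹ := fun s => by
    rw [← Real.exp_nat_mul, ← Real.exp_neg]
    ring_nf
  rw [hsq u, hsq v, Real.cosh_eq, Real.cosh_eq, Real.exp_neg, Real.exp_neg, sub_div, add_div u v,
    Real.exp_sub, Real.exp_add]
  field_simp
  ring

theorem exists_eq_mul_exp_of_le {x y δ : ℝ} (hx : 0 < x) (hxy : x ≤ y) (hyx : y ≤ x * (1 + δ)) :
    ∃ r ≤ 0, x = y * Real.exp r ∧ |r| ≤ δ := by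
  have hy : 0 < y := hx.trans_le hxy
  have hlog : Real.log (x / y) ≤ 0 := Real.log_nonpos (by positivity) (div_le_one_of_le₀ hxy hy.le)
  refine ⟨Real.log (x / y), hlog, ?_, ?_⟩
  · rw [Real.exp_log (by positivity), mul_div_cancel₀ _ hy.ne']
  · rw [abs_of_nonpos hlog, ← Real.log_inv, inv_div]
    have hle := Real.log_le_sub_one_of_pos (div_pos hy hx)
    have hdiv : y / x ≤ 1 + δ := (div_le_iff₀' hx).mpr hyx
    linarith

theorem exists_pow_le_mul_exp_neg_rpow {θ ε : ℝ} (hθ0 : 0 < θ) (hθ1 : θ < 1) (hε : 0 < ε) :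
    ∃ C > 0, ∀ k : ℕ, θ ^ k ≤ C * Real.exp (-(k : ℝ) ^ (1 - ε)) := by
  have hsmall : ∀ᶠ k : ℕ in atTop, (k : ℝ) ^ (-ε) ≤ -Real.log θ :=
    ((tendsto_rpow_neg_atTop hε).comp tendsto_natCast_atTop_atTop).eventually_le_const
      (neg_pos.mpr (Real.log_neg hθ0 hθ1))
  have hle : ∀ᶠ k : ℕ in atTop, θ ^ k * Real.exp ((k : ℝ) ^ (1 - ε)) ≤ 1 := by
    filter_upwards [hsmall, eventually_gt_atTop 0] with k hk hk0
    have hk0' : (0 : ℝ) < k := mod_cast hk0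
    rw [← Real.exp_log (pow_pos hθ0 k), Real.log_pow, ← Real.exp_add, Real.exp_le_one_iff,
      sub_eq_add_neg, Real.rpow_add hk0', Real.rpow_one]
    nlinarith
  obtain ⟨C, hC⟩ := (isBoundedUnder_of_eventually_le hle).bddAbove_range
  have hbound := fun k : ℕ => hC (Set.mem_range_self k)
  refine ⟨C, lt_of_lt_of_le (by positivity) (hbound 0), fun k => ?_⟩
  rw [Real.exp_neg, ← div_eq_mul_inv, le_div_iff₀ (Real.exp_pos _)]
  exact hbound k

theorem exists_sinh_mul_exp_mul_cosh_pow_le {t γ ε : ℝ} (hγ : 0 < γ) (ht : γ < t) (hε : 0 < ε) :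
    ∃ C > 0, ∀ m k : ℕ,
      Real.sinh (t - γ) / (2 * Real.sinh (2 * γ) * Real.sinh (t + γ)) * Real.exp (-2 * γ * m) *
          (Real.cosh ((t - 3 * γ) / 2) / Real.cosh ((t + γ) / 2)) ^ (m + 2 * k) ≤
        C * Real.exp (-2 * γ * m - (k : ℝ) ^ (1 - ε)) := by
  set K := Real.sinh (t - γ) / (2 * Real.sinh (2 * γ) * Real.sinh (t + γ))
  have hK : 0 < K := by
    refine div_pos ?_ (mul_pos (mul_pos two_pos ?_) ?_) <;>
      exact Real.sinh_pos_iff.mpr (by linarith)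
  set θ := Real.cosh ((t - 3 * γ) / 2) / Real.cosh ((t + γ) / 2)
  have hθ0 : 0 < θ := div_pos (Real.cosh_pos _) (Real.cosh_pos _)
  have hθ1 : θ < 1 := (div_lt_one (Real.cosh_pos _)).mpr <| Real.cosh_lt_cosh.mpr <|
    (abs_lt.mpr ⟨by linarith, by linarith⟩).trans_le (le_abs_self _)
  obtain ⟨C, hC, hpow⟩ := exists_pow_le_mul_exp_neg_rpow hθ0 hθ1 hε
  refine ⟨K * C, mul_pos hK hC, fun m k => ?_⟩
  calc K * Real.exp (-2 * γ * m) * θ ^ (m + 2 * k)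
      ≤ K * Real.exp (-2 * γ * m) * (C * Real.exp (-(k : ℝ) ^ (1 - ε))) := by
        gcongr
        exact (pow_le_pow_of_le_one hθ0.le hθ1.le (by omega)).trans (hpow k)
    _ = K * C * Real.exp (-2 * γ * m - (k : ℝ) ^ (1 - ε)) := by
        rw [sub_eq_add_neg (-2 * γ * m : ℝ), Real.exp_add]
        ring

theorem norm_ratio_asymptotics_all_m_general {t γ : ℝ} (hγ : 0 < γ) (ht : γ < t) {m : ℕ}
    {p pM : ℕ → ℝ[X]} {h hM : ℕ → ℝ} (H : IsMonicOPS (wfun t γ m) p h)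
    (F : IsMonicOPS (wM t γ m) pM hM) (k : ℕ) :
    ∃ r ≤ 0, h k = hM k * Real.exp r ∧
      |r| ≤ Real.sinh (t - γ) / (2 * Real.sinh (2 * γ) * Real.sinh (t + γ)) *
        Real.exp (-2 * γ * m) *
        (Real.cosh ((t - 3 * γ) / 2) / Real.cosh ((t + γ) / 2)) ^ (m + 2 * k) := by
  set a := Real.exp (-(t - γ))
  set b := Real.exp (-(2 * γ)) with hb
  have ha0 : 0 < a := Real.exp_pos _
  have hb0 : 0 < b := Real.exp_pos _
  have ha1 : a < 1 := Real.exp_lt_one_iff.mpr (by linarith)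
  have hb1 : b < 1 := Real.exp_lt_one_iff.mpr (by linarith)
  have hK : 0 < (a ^ 2) ^ (m + 1) * m.factorial := by positivity
  have H' := H.of_eq_const_mul hK (wfun_eq t γ m)
  have F' := F.of_eq_const_mul hK (wM_eq t γ m)
  have hle := H'.norm_le_norm F'
    (fun x => (dampedMeixnerWeight_pos (by positivity) (by positivity) (by nlinarith) m x).le)
    (dampedMeixnerWeight_le (by positivity) (by positivity) m) k
  have hge := H'.norm_meixner_le_norm_damped_mul ha0 ha1 hb0 hb1 F' k
  rw [mul_assoc] at hge
  refine exists_eq_mul_exp_of_le (H.2.1 k) (le_of_mul_le_mul_left hle (inv_pos.mpr hK)) ?_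
  refine (le_of_mul_le_mul_left hge (inv_pos.mpr hK)).trans_eq ?_
  have hpow : b ^ m = Real.exp (-2 * γ * m) := by
    rw [hb, ← Real.exp_nat_mul]
    ring_nf
  rw [hpow, exp_neg_sq_mul_div_eq_sinh, exp_neg_add_div_eq_cosh]
  ring_nf

/-- For all `m ≥ 0` and `k ≥ 0`, `h_k = h_k^M e^{r_k}` with
`|r_k| ≤ C_ε e^{-2γm - k^{1-ε}}`. -/
theorem norm_ratio_asymptotics_all_m (t γ ε : ℝ) (hγ : 0 < γ) (ht : γ < t)
    (hε0 : 0 < ε) (hε1 : ε < 1) :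
    ∃ C > (0 : ℝ), ∀ m : ℕ, ∀ (p pM : ℕ → Polynomial ℝ) (h hM : ℕ → ℝ),
      IsMonicOPS (wfun t γ m) p h → IsMonicOPS (wM t γ m) pM hM → ∀ k : ℕ,
        ∃ r : ℝ, h k = hM k * Real.exp r ∧
          |r| ≤ C * Real.exp (-2 * γ * (m : ℝ) - (k : ℝ) ^ ((1 : ℝ) - ε)) := by
  obtain ⟨C, hC, hle⟩ := exists_sinh_mul_exp_mul_cosh_pow_le hγ ht hε0
  refine ⟨C, hC, fun m p pM h hM H F k => ?_⟩
  obtain ⟨r, -, hr, hrle⟩ := norm_ratio_asymptotics_all_m_general hγ ht H F k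
  exact ⟨r, hr, hrle.trans (hle m k)⟩

end Asymptotics

end SixVertex
end
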